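/- arXiv:1106.6343 — 2 statements merged into one kernel-verified Lean document; each statement's English description precedes it below -/
import Mathlib

section
/- (Simplification of nodal curves.) Let α ∈ ℂ^I be such that C_α is a nodal curve with exactly l ≥ 1 nodes, and let P_{i_1},…,P_{i_λ} be λ pairwise distinct nodes of C_α, where 1 ≤ λ ≤ l. Then for all real ε > 0 and δ > 0 there exists β ∈ ℂ^I with ‖β − α‖ < ε such that C_β is a nodal curve with exactly λ nodes, and these nodes can be enumerated as Q_1,…,Q_λ with ‖Q_k − P_{i_k}‖ < δ for k = 1,…,λ. -/
open MvPolynomial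

/-- The index set `I` of pairs `(ν,μ)` of nonnegative integers with `νp + μq < pq`
(for `p, q ≥ 1` the conditions `ν < q`, `μ < p` are automatic). -/
def idxSet (p q : ℕ) : Finset (ℕ × ℕ) :=
  (Finset.range q ×ˢ Finset.range p).filter fun t => t.1 * p + t.2 * q < p * q

/-- The normed Weierstraß polynomial `F_α = Y^p − X^q + Σ a_{νμ} X^ν Y^μ`,
as a polynomial in two variables `X 0 = X`, `X 1 = Y`. -/
noncomputable def wPoly (K : Type) [CommRing K] (p q : ℕ) (a : idxSet p q → K) :
    MvPolynomial (Fin 2) K :=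
  X 1 ^ p - X 0 ^ q + ∑ i : idxSet p q, C (a i) * X 0 ^ (i : ℕ × ℕ).1 * X 1 ^ (i : ℕ × ℕ).2

/-- The Hessian determinant `G_{XX} G_{YY} − G_{XY}²` of a polynomial in `X, Y`. -/
noncomputable def hessPoly (K : Type) [CommRing K] (G : MvPolynomial (Fin 2) K) :
    MvPolynomial (Fin 2) K :=
  pderiv 0 (pderiv 0 G) * pderiv 1 (pderiv 1 G) - (pderiv 0 (pderiv 1 G)) ^ 2

/-- `P` is a singular point of the curve `G = 0`. -/
def IsSingAt (K : Type) [CommRing K] (G : MvPolynomial (Fin 2) K) (P : K × K) : Prop :=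
  eval ![P.1, P.2] G = 0 ∧ eval ![P.1, P.2] (pderiv 0 G) = 0 ∧ eval ![P.1, P.2] (pderiv 1 G) = 0

/-- `P` is a node of the curve `G = 0`. -/
def IsNodeAt (K : Type) [CommRing K] (G : MvPolynomial (Fin 2) K) (P : K × K) : Prop :=
  IsSingAt K G P ∧ eval ![P.1, P.2] (hessPoly K G) ≠ 0

/-!
Writing `F = F_α` and weighting `X` by `p` and `Y` by `q`, the proof rests on the fact that the
nodes of a nodal curve impose independent conditions on the polynomials of weight less than `pq`.
The leading forms of `F_X` and `F_Y` are multiples of `X ^ (q-1)` and `Y ^ (p-1)`, so division by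
`F_X, F_Y` represents `ℂ[X,Y] ⧸ (F_X, F_Y)` by monomials, and the coefficient `s` of
`X ^ (q-2) * Y ^ (p-2)` of the remainder gives a perfect pairing `(G, H) ↦ s (G H)`. A dependency
among the nodes is therefore `s (G ·)` for some `G` with `G F = A₀ F_X + A₁ F_Y`, where the `Aᵢ`
vanish at the nodes and have small weight. On the curve `A₀ / F_Y` is then locally bounded and tends
to `0` at infinity; multiplying out over the `p` points above each `X` and using Liouville's
theorem, it vanishes, so `F ∣ A₀` and `A₀ = 0`.

By independence and the open mapping theorem one may move `(α, P)` so that the curve keeps a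
singular point near each selected node, while near each of the other nodes only a critical point of
nonzero value remains. Nondegenerate critical points are locally unique, and the critical points of
nearby curves stay in a compact set, so no further singular points appear.
-/

section WeightedDivision

open Finsupp (weight)

variable {σ ι K : Type*} {w : σ → ℕ}

section CommSemiring

variable [CommSemiring K]

lemma mem_restrictSupport_iff_coeff {s : Set (σ →₀ ℕ)} {G : MvPolynomial σ K} :
    G ∈ restrictSupport K s ↔ ∀ d, coeff d G ≠ 0 → d ∈ s := by
  simp [mem_restrictSupport_iff, Set.subset_def]

lemma monomial_mem_restrictSupport_of_mem {s : Set (σ →₀ ℕ)} {d : σ →₀ ℕ} (hd : d ∈ s) (c : K) :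
    monomial d c ∈ restrictSupport K s :=
  (monomial_mem_restrictSupport K).2 (Or.inl hd)

lemma coeff_eq_zero_of_mem_restrictSupport {s : Set (σ →₀ ℕ)} {G : MvPolynomial σ K}
    (hG : G ∈ restrictSupport K s) {d : σ →₀ ℕ} (hd : d ∉ s) : coeff d G = 0 :=
  not_not.1 fun h => hd (mem_restrictSupport_iff_coeff.1 hG d h)

open Pointwise in
lemma mul_mem_restrictSupport {s t u : Set (σ →₀ ℕ)} {G H : MvPolynomial σ K}
    (hG : G ∈ restrictSupport K s) (hH : H ∈ restrictSupport K t) (h : s + t ⊆ u) :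
    G * H ∈ restrictSupport K u := by
  refine restrictSupport_mono K h ?_
  rw [restrictSupport_add]
  exact Submodule.mul_mem_mul hG hH

variable (K w) in
/-- The polynomials of weighted degree less than `k`, where the variable `X i` has weight `w i`. -/
noncomputable def weightLT (k : ℕ) : Submodule K (MvPolynomial σ K) :=
  restrictSupport K {d | weight w d < k}

lemma mem_weightLT {k : ℕ} {G : MvPolynomial σ K} :
    G ∈ weightLT K w k ↔ ∀ d, coeff d G ≠ 0 → weight w d < k :=
  mem_restrictSupport_iff_coeff

lemma monomial_mem_weightLT {k : ℕ} {d : σ →₀ ℕ} (hd : weight w d < k) (c : K) :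
    monomial d c ∈ weightLT K w k :=
  monomial_mem_restrictSupport_of_mem hd c

lemma weightLT_mono : Monotone (weightLT K w) := fun _ _ h =>
  restrictSupport_mono K fun _ hd => lt_of_lt_of_le hd h

lemma weightLT_zero : weightLT K w 0 = ⊥ := by
  simp [weightLT, restrictSupport_eq_span]

lemma mul_mem_weightLT {j k l : ℕ} {A B : MvPolynomial σ K} (hA : A ∈ weightLT K w j)
    (hB : B ∈ weightLT K w k) (h : ∀ a < j, ∀ b < k, a + b < l) : A * B ∈ weightLT K w l := by
  refine mul_mem_restrictSupport hA hB ?_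
  rintro _ ⟨d, hd, e, he, rfl⟩
  simpa using h _ hd _ he

lemma exists_mem_weightLT (w : σ → ℕ) (G : MvPolynomial σ K) : ∃ k, G ∈ weightLT K w k :=
  ⟨G.support.sup (weight w) + 1, mem_weightLT.2 fun _ hd =>
    Nat.lt_succ_of_le (Finset.le_sup (mem_support_iff.2 hd))⟩

lemma weight_tsub_add {d e : σ →₀ ℕ} (h : e ≤ d) : weight w (d - e) + weight w e = weight w d := by
  rw [← map_add, tsub_add_cancel_of_le h]

variable (K) in
/-- The span of the standard monomials: those divisible by none of the `X ^ e i`. -/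
noncomputable def standardSpan (e : ι → σ →₀ ℕ) : Submodule K (MvPolynomial σ K) :=
  restrictSupport K {d | ∀ i, ¬ e i ≤ d}

lemma monomial_mem_standardSpan {e : ι → σ →₀ ℕ} {d : σ →₀ ℕ} (hd : ∀ i, ¬ e i ≤ d) (c : K) :
    monomial d c ∈ standardSpan K e :=
  monomial_mem_restrictSupport_of_mem (s := {d | ∀ i, ¬ e i ≤ d}) hd c

end CommSemiring

lemma coeff_mul_of_sub_monomial_mem_weightLT [CommRing K] {f A : MvPolynomial σ K}
    {e d : σ →₀ ℕ} {c : K} (hfc : f - monomial e c ∈ weightLT K w (weight w e))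
    (hA : A ∈ weightLT K w (weight w d + 1 - weight w e)) :
    coeff d (A * f) = if e ≤ d then coeff (d - e) A * c else 0 := by
  have hlow : A * (f - monomial e c) ∈ weightLT K w (weight w d) :=
    mul_mem_weightLT hA hfc fun a _ b _ => by omega
  rw [← coeff_mul_monomial', ← sub_eq_zero, ← coeff_sub, ← mul_sub]
  exact coeff_eq_zero_of_mem_restrictSupport hlow (lt_irrefl (weight w d))

variable [Field K]

variable (w) in
/-- `f` is `c X ^ e` plus terms of smaller weight, for some `c ≠ 0`. -/
def HasLeadingMonomial (f : MvPolynomial σ K) (e : σ →₀ ℕ) : Prop :=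
  ∃ c : K, c ≠ 0 ∧ f - monomial e c ∈ weightLT K w (weight w e)

lemma HasLeadingMonomial.exists_monomial_eq {f : MvPolynomial σ K} {e d : σ →₀ ℕ}
    (hf : HasLeadingMonomial w f e) (hed : e ≤ d) :
    ∃ A ∈ weightLT K w (weight w d + 1 - weight w e), ∃ R ∈ weightLT K w (weight w d),
      monomial d (1 : K) = A * f + R := by
  obtain ⟨c, hc, hfc⟩ := hf
  have hw := weight_tsub_add (w := w) hed
  have hA := monomial_mem_weightLT (K := K) (w := w) (d := d - e)
    (k := weight w d + 1 - weight w e) (by omega) c⁻¹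
  refine ⟨_, hA, _, neg_mem (mul_mem_weightLT hA hfc fun a _ b _ => by omega), ?_⟩
  rw [mul_sub, monomial_mul, tsub_add_cancel_of_le hed, inv_mul_cancel₀ hc]
  ring

lemma weightLT_le_standardSpan_sup [Fintype ι] {f : ι → MvPolynomial σ K} {e : ι → σ →₀ ℕ}
    (hf : ∀ i, HasLeadingMonomial w (f i) (e i)) (k : ℕ) :
    weightLT K w k ≤ standardSpan K e ⊓ weightLT K w k ⊔
      (Submodule.pi Set.univ fun i => weightLT K w (k - weight w (e i))).map
        ((Fintype.linearCombination (MvPolynomial σ K) f).restrictScalars K) := by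
  classical
  induction k with
  | zero => simp [weightLT_zero]
  | succ k ih =>
    have hk : weightLT K w k ≤ _ := ih.trans <| sup_le_sup
      (inf_le_inf_left _ (weightLT_mono k.le_succ)) <| Submodule.map_mono <|
      Submodule.pi_mono fun i _ => weightLT_mono (Nat.sub_le_sub_right k.le_succ _)
    conv_lhs => rw [weightLT, restrictSupport_eq_span]
    refine Submodule.span_le.2 ?_
    rintro _ ⟨d, hd : weight w d < k + 1, rfl⟩
    change monomial d (1 : K) ∈ _
    by_cases hdiv : ∃ i, e i ≤ d
    · obtain ⟨i, hi⟩ := hdiv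
      obtain ⟨A, hA, R, hR, hAR⟩ := (hf i).exists_monomial_eq hi
      rw [hAR]
      refine add_mem (Submodule.mem_sup_right ⟨Pi.single i A, fun j _ => ?_, ?_⟩)
        (hk (weightLT_mono (by omega) hR))
      · rcases eq_or_ne j i with rfl | hji
        · simpa using weightLT_mono (by omega) hA
        · simp [hji]
      · simp [Fintype.linearCombination_apply_single]
    · exact Submodule.mem_sup_left ⟨monomial_mem_standardSpan (not_exists.1 hdiv) 1,
        monomial_mem_weightLT hd 1⟩

theorem exists_eq_standard_add_sum [Fintype ι] {f : ι → MvPolynomial σ K} {e : ι → σ →₀ ℕ}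
    (hf : ∀ i, HasLeadingMonomial w (f i) (e i)) {k : ℕ} {H : MvPolynomial σ K}
    (hH : H ∈ weightLT K w k) :
    ∃ r ∈ standardSpan K e, ∃ A : ι → MvPolynomial σ K,
      r ∈ weightLT K w k ∧ (∀ i, A i ∈ weightLT K w (k - weight w (e i))) ∧
        H = r + ∑ i, A i * f i := by
  obtain ⟨r, hr, _, ⟨A, hA, rfl⟩, rfl⟩ := Submodule.mem_sup.1 (weightLT_le_standardSpan_sup hf k hH)
  exact ⟨r, hr.1, A, hr.2, fun i => hA i trivial, by simp [Fintype.linearCombination_apply]⟩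

end WeightedDivision

section SocleDuality

open Finsupp (weight)

variable {σ K : Type*} [Field K] {w : σ → ℕ} {t : σ →₀ ℕ} {f : σ → MvPolynomial σ K}

/-- The exponents of the pure powers `X i ^ (t i + 1)`; their standard monomials are the divisors
of `X ^ t`. -/
noncomputable def purePowers (t : σ →₀ ℕ) (i : σ) : σ →₀ ℕ := Finsupp.single i (t i + 1)

lemma purePowers_apply_self (i : σ) : purePowers t i i = t i + 1 := Finsupp.single_eq_same

lemma purePowers_apply_of_ne {i j : σ} (h : j ≠ i) : purePowers t i j = 0 :=
  Finsupp.single_eq_of_ne h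

lemma purePowers_le_iff {d : σ →₀ ℕ} {i : σ} : purePowers t i ≤ d ↔ t i < d i :=
  Finsupp.single_le_iff

lemma mem_standardSpan_purePowers {G : MvPolynomial σ K} :
    G ∈ standardSpan K (purePowers t) ↔ ∀ d, coeff d G ≠ 0 → d ≤ t := by
  simp only [standardSpan, mem_restrictSupport_iff_coeff, Set.mem_ofPred_eq, purePowers_le_iff,
    not_lt]
  rfl

lemma weight_lt_weight_of_lt (hw : ∀ i, w i ≠ 0) {d : σ →₀ ℕ} (h : d < t) :
    weight w d < weight w t := by
  have : Finsupp.NonTorsionWeight ℕ w := Finsupp.nonTorsionWeight_of ℕ w hw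
  have hne : weight w (t - d) ≠ 0 := by
    rw [Ne, Finsupp.weight_eq_zero_iff_eq_zero]
    exact (tsub_pos_of_lt h).ne'
  have := weight_tsub_add (w := w) h.le
  omega

/-- A linear functional on `K[X] / (f)` that agrees with the coefficient of `X ^ t` on all
polynomials of weight at most that of `X ^ t`. -/
structure IsSocleFunctional (w : σ → ℕ) (f : σ → MvPolynomial σ K) (t : σ →₀ ℕ)
    (lam : MvPolynomial σ K →ₗ[K] K) : Prop where
  apply_mul_eq_zero : ∀ i A, lam (A * f i) = 0
  apply_monomial_self : lam (monomial t 1) = 1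
  apply_monomial_of_ne : ∀ d, weight w d ≤ weight w t → d ≠ t → lam (monomial d 1) = 0

namespace IsSocleFunctional

variable {lam : MvPolynomial σ K →ₗ[K] K}

lemma apply_sum_mul [Fintype σ] (hlam : IsSocleFunctional w f t lam) (A : σ → MvPolynomial σ K) :
    lam (∑ i, A i * f i) = 0 := by
  simp [hlam.apply_mul_eq_zero]

lemma apply_mul_monomial (hlam : IsSocleFunctional w f t lam) {G : MvPolynomial σ K} {d : σ →₀ ℕ}
    (hd : d ≤ t) (hmax : ∀ e ∈ G.support, weight w e ≤ weight w d) :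
    lam (G * monomial (t - d) 1) = coeff d G := by
  have hmon (e : σ →₀ ℕ) (c : K) : lam (monomial e c) = c * lam (monomial e 1) := by
    rw [← smul_eq_mul, ← map_smul, smul_monomial, smul_eq_mul, mul_one]
  conv_lhs => rw [G.as_sum, Finset.sum_mul, map_sum]
  rw [Finset.sum_eq_single d]
  · rw [monomial_mul, add_tsub_cancel_of_le hd, hmon, hlam.apply_monomial_self, mul_one, mul_one]
  · intro e he hne
    rw [monomial_mul, hmon, hlam.apply_monomial_of_ne, mul_zero]
    · have := weight_tsub_add (w := w) hd
      have := hmax e he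
      rw [map_add]
      omega
    · rw [← add_tsub_cancel_of_le hd, add_tsub_cancel_left]
      exact fun h => hne (add_right_cancel h)
  · intro h
    simp [notMem_support_iff.1 h]

lemma exists_apply_mul_monomial_ne_zero (hlam : IsSocleFunctional w f t lam)
    {G : MvPolynomial σ K} (hG : G ∈ standardSpan K (purePowers t)) (hG0 : G ≠ 0) :
    ∃ d ≤ t, (∀ e ∈ G.support, weight w e ≤ weight w d) ∧ lam (G * monomial (t - d) 1) ≠ 0 := by
  obtain ⟨d, hd, hmax⟩ := G.support.exists_max_image (weight w) (support_nonempty.2 hG0)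
  have hdt := mem_standardSpan_purePowers.1 hG d (mem_support_iff.1 hd)
  refine ⟨d, hdt, hmax, ?_⟩
  rw [hlam.apply_mul_monomial hdt hmax]
  exact mem_support_iff.1 hd

/-- The pairing `(G, H) ↦ lam (G * H)` on the span of the divisors of `X ^ t` is nondegenerate,
hence perfect. -/
theorem exists_forall_eq_apply_mul [Finite σ] (hlam : IsSocleFunctional w f t lam)
    (hf : ∀ i, HasLeadingMonomial w (f i) (purePowers t i)) (φ : MvPolynomial σ K →ₗ[K] K)
    (hφ : ∀ i A, φ (A * f i) = 0) :
    ∃ G ∈ standardSpan K (purePowers t), ∀ H, φ H = lam (G * H) := by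
  classical
  have := Fintype.ofFinite σ
  let W := standardSpan K (purePowers t)
  have : Module.Finite K W := by
    have : Finite {d : σ →₀ ℕ | ∀ i, ¬ purePowers t i ≤ d} :=
      (Set.finite_Iic t).subset fun d hd i => not_lt.1 fun h => hd i (purePowers_le_iff.2 h)
    exact Module.Finite.of_basis (basisRestrictSupport K _)
  let T : W →ₗ[K] Module.Dual K W :=
    ((LinearMap.mul K (MvPolynomial σ K)).compr₂ lam).domRestrict₁₂ W W
  have hTinj : Function.Injective T := by
    rw [injective_iff_map_eq_zero]
    intro G hG
    by_contra hne
    obtain ⟨d, -, -, h⟩ := hlam.exists_apply_mul_monomial_ne_zero G.2 (by simpa using hne)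
    have hm : monomial (t - d) (1 : K) ∈ W := mem_standardSpan_purePowers.2 fun e he => by
      rw [coeff_monomial] at he
      exact (of_not_not fun h => he (if_neg h)) ▸ tsub_le_self
    exact h (LinearMap.congr_fun hG ⟨_, hm⟩)
  obtain ⟨G, hG⟩ := (LinearMap.injective_iff_surjective_of_finrank_eq_finrank
    Subspace.dual_finrank_eq.symm).1 hTinj (φ.domRestrict W)
  refine ⟨G, G.2, fun H => ?_⟩
  obtain ⟨k, hk⟩ := exists_mem_weightLT w H
  obtain ⟨r, hr, A, -, -, rfl⟩ := exists_eq_standard_add_sum hf hk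
  have hGr : lam (G * r) = φ r := LinearMap.congr_fun hG ⟨r, hr⟩
  have hGA : lam (G * ∑ i, A i * f i) = 0 := by
    simpa only [Finset.mul_sum, mul_assoc] using hlam.apply_sum_mul fun i => G * A i
  rw [mul_add, map_add, map_add, hGr, hGA, map_sum]
  simp [hφ]

/-- If `φ` annihilates `(f)`, the multiples of `F` and all polynomials of weight `< k`, then its
dual `G` multiplies `F` into `(f)`, and `G` is small since `φ` sees nothing of small weight. -/
theorem exists_mul_eq_sum [Fintype σ] (hlam : IsSocleFunctional w f t lam)
    (hf : ∀ i, HasLeadingMonomial w (f i) (purePowers t i)) {F : MvPolynomial σ K} {k : ℕ}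
    (hF : F ∈ weightLT K w (k + 1)) {φ : MvPolynomial σ K →ₗ[K] K} (hφ0 : φ ≠ 0)
    (hφf : ∀ i A, φ (A * f i) = 0) (hφF : ∀ A, φ (A * F) = 0)
    (hφk : ∀ A ∈ weightLT K w k, φ A = 0) :
    ∃ G, G ≠ 0 ∧ ∃ A : σ → MvPolynomial σ K,
      (∀ i, A i ∈ weightLT K w (weight w t + 1 - weight w (purePowers t i))) ∧
        G * F = ∑ i, A i * f i := by
  obtain ⟨G, hG, hrep⟩ := hlam.exists_forall_eq_apply_mul hf φ hφf
  have hG0 : G ≠ 0 := by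
    rintro rfl
    exact hφ0 (LinearMap.ext fun H => by simp [hrep])
  obtain ⟨d, hdt, hmax, hd⟩ := hlam.exists_apply_mul_monomial_ne_zero hG hG0
  have hk : k ≤ weight w (t - d) := by
    by_contra hlt
    exact hd (hrep _ ▸ hφk _ (monomial_mem_weightLT (not_le.1 hlt) 1))
  have hGF : G * F ∈ weightLT K w (weight w t + 1) := by
    have hGd : G ∈ weightLT K w (weight w d + 1) :=
      mem_weightLT.2 fun e he => Nat.lt_succ_of_le (hmax e (mem_support_iff.2 he))
    have := weight_tsub_add (w := w) hdt
    exact mul_mem_weightLT hGd hF fun a _ b _ => by omega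
  obtain ⟨r, hr, A, -, hA, hGFr⟩ := exists_eq_standard_add_sum hf hGF
  refine ⟨G, hG0, A, hA, ?_⟩
  have hr0 : r = 0 := by
    by_contra hne
    obtain ⟨d, -, -, h⟩ := hlam.exists_apply_mul_monomial_ne_zero hr hne
    have hsum := hlam.apply_sum_mul fun i => monomial (t - d) 1 * A i
    simp only [mul_assoc, ← Finset.mul_sum] at hsum
    have hrd : r * monomial (t - d) 1 =
        G * (monomial (t - d) 1 * F) - monomial (t - d) 1 * ∑ i, A i * f i := by
      linear_combination -monomial (t - d) (1 : K) * hGFr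
    exact h (by rw [hrd, map_sub, ← hrep, hφF, hsum, sub_zero])
  rw [hGFr, hr0, zero_add]

end IsSocleFunctional

end SocleDuality

section RemainderUniqueness

open Finsupp (weight)

variable {K : Type*} [Field K] {w : Fin 2 → ℕ} {t : Fin 2 →₀ ℕ}
  {f A : Fin 2 → MvPolynomial (Fin 2) K}

lemma exists_sum_mul_eq_with_degree_le (hf : HasLeadingMonomial w (f 1) (purePowers t 1))
    (A : Fin 2 → MvPolynomial (Fin 2) K) :
    ∃ B : Fin 2 → MvPolynomial (Fin 2) K,
      B 0 ∈ restrictSupport K {d | d 1 ≤ t 1} ∧ ∑ i, B i * f i = ∑ i, A i * f i := by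
  obtain ⟨k, hk⟩ := exists_mem_weightLT w (A 0)
  obtain ⟨r, hr, c, -, -, hA⟩ := exists_eq_standard_add_sum (f := fun _ : Unit => f 1)
    (e := fun _ => purePowers t 1) (fun _ => hf) hk
  refine ⟨![r, A 1 + c () * f 0], ?_, ?_⟩
  · refine restrictSupport_mono K (fun d hd => ?_) hr
    exact not_lt.1 fun h => hd () (purePowers_le_iff.2 h)
  · rw [Fin.sum_univ_two, Fin.sum_univ_two, hA, Fintype.sum_unique]
    simp only [Matrix.cons_val_zero, Matrix.cons_val_one]
    ring

/-- Comparing coefficients in the top weight `k` shows that the cofactors of a relation with a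
standard right-hand side have no top part. -/
lemma cofactor_mem_weightLT (hf : ∀ i, HasLeadingMonomial w (f i) (purePowers t i))
    (hr : ∑ i, A i * f i ∈ standardSpan K (purePowers t))
    (hA0 : A 0 ∈ restrictSupport K {d | d 1 ≤ t 1}) {k : ℕ}
    (hA : ∀ i, A i ∈ weightLT K w (k + 1 - weight w (purePowers t i))) (i : Fin 2) :
    A i ∈ weightLT K w (k - weight w (purePowers t i)) := by
  choose c hc hfc using hf
  have hcoeff (D : Fin 2 →₀ ℕ) (hD : weight w D = k) : coeff D (∑ i, A i * f i) =
      (if purePowers t 0 ≤ D then coeff (D - purePowers t 0) (A 0) * c 0 else 0) +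
        if purePowers t 1 ≤ D then coeff (D - purePowers t 1) (A 1) * c 1 else 0 := by
    rw [Fin.sum_univ_two, coeff_add]
    exact congrArg₂ (· + ·) (coeff_mul_of_sub_monomial_mem_weightLT (hfc 0) (hD ▸ hA 0))
      (coeff_mul_of_sub_monomial_mem_weightLT (hfc 1) (hD ▸ hA 1))
  have hcoeff0 (D : Fin 2 →₀ ℕ) (i : Fin 2) : coeff (D + purePowers t i) (∑ i, A i * f i) = 0 :=
    coeff_eq_zero_of_mem_restrictSupport hr fun h => h i le_add_self
  suffices h : ∀ i d, coeff d (A i) ≠ 0 → weight w d + weight w (purePowers t i) ≠ k from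
    mem_weightLT.2 fun d hd => by
      have := mem_weightLT.1 (hA i) d hd
      have := h i d hd
      omega
  intro i d hd hdk
  have htop := hcoeff (d + purePowers t i) (by rw [map_add, hdk])
  rw [hcoeff0] at htop
  match i with
  | 0 =>
    have hd1 : d 1 ≤ t 1 := mem_restrictSupport_iff_coeff.1 hA0 d hd
    have hnle : ¬ purePowers t 1 ≤ d + purePowers t 0 := by
      simpa [purePowers_le_iff, purePowers_apply_of_ne] using hd1
    rw [if_pos le_add_self, if_neg hnle, add_zero, add_tsub_cancel_right] at htop
    exact mul_ne_zero hd (hc 0) htop.symm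
  | 1 =>
    have hzero : coeff (d + purePowers t 1 - purePowers t 0) (A 0) = 0 :=
      coeff_eq_zero_of_mem_restrictSupport hA0 <| by
        have h1 : (d + purePowers t 1 - purePowers t 0) 1 = d 1 + (t 1 + 1) := by
          simp [purePowers_apply_of_ne, purePowers_apply_self]
        rw [Set.mem_ofPred_eq, h1]
        omega
    rw [hzero, zero_mul, ite_self, zero_add, if_pos le_add_self, add_tsub_cancel_right] at htop
    exact mul_ne_zero hd (hc 1) htop.symm

theorem sum_mul_eq_zero_of_mem_standardSpan
    (hf : ∀ i, HasLeadingMonomial w (f i) (purePowers t i))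
    (hr : ∑ i, A i * f i ∈ standardSpan K (purePowers t)) : ∑ i, A i * f i = 0 := by
  obtain ⟨B, hB0, hBA⟩ := exists_sum_mul_eq_with_degree_le (hf 1) A
  rw [← hBA] at hr ⊢
  have descend (k : ℕ) : (∀ i, B i ∈ weightLT K w (k - weight w (purePowers t i))) →
      ∀ i, B i = 0 := by
    induction k with
    | zero => exact fun h i => by simpa [weightLT_zero] using h i
    | succ k ih => exact fun h => ih fun i => cofactor_mem_weightLT hf hr hB0 h i
  choose k hk using fun i => exists_mem_weightLT w (B i)
  have hB : ∀ i, B i = 0 := by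
    refine descend (∑ i, (k i + weight w (purePowers t i))) fun i => weightLT_mono ?_ (hk i)
    have := Finset.single_le_sum (f := fun i => k i + weight w (purePowers t i))
      (fun _ _ => Nat.zero_le _) (Finset.mem_univ i)
    omega
  simp [hB]

theorem exists_isSocleFunctional (hw : ∀ i, w i ≠ 0)
    (hf : ∀ i, HasLeadingMonomial w (f i) (purePowers t i)) :
    ∃ lam, IsSocleFunctional w f t lam := by
  let N := weightLT K w (weight w t) ⊔ (Ideal.span (Set.range f)).restrictScalars K
  have hfN (i : Fin 2) (A : MvPolynomial (Fin 2) K) : A * f i ∈ N :=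
    Submodule.mem_sup_right (Ideal.mul_mem_left _ A (Ideal.subset_span ⟨i, rfl⟩))
  have htN : monomial t (1 : K) ∉ N := by
    intro h
    obtain ⟨H, hH, j, hj, hHj⟩ := Submodule.mem_sup.1 h
    obtain ⟨B, rfl⟩ := Ideal.mem_span_range_iff_exists_fun.1 hj
    obtain ⟨r, hr, A, hrt, -, rfl⟩ := exists_eq_standard_add_sum hf hH
    have hsum : ∑ i, (A + B) i * f i = monomial t 1 - r := by
      simp only [Pi.add_apply, add_mul, Finset.sum_add_distrib, ← hHj]
      ring
    have htr : monomial t (1 : K) - r = 0 := by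
      rw [← hsum]
      refine sum_mul_eq_zero_of_mem_standardSpan hf (hsum ▸ sub_mem ?_ hr)
      exact monomial_mem_standardSpan (fun i h => lt_irrefl _ (purePowers_le_iff.1 h)) 1
    have := mem_weightLT.1 (sub_eq_zero.1 htr ▸ hrt) t (by simp)
    exact lt_irrefl _ this
  obtain ⟨mu, hmu, hker⟩ := Submodule.exists_le_ker_of_notMem htN
  have hN (H : MvPolynomial (Fin 2) K) (hH : H ∈ N) : ((mu (monomial t 1))⁻¹ • mu) H = 0 := by
    rw [LinearMap.smul_apply, LinearMap.mem_ker.1 (hker hH), smul_zero]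
  refine ⟨(mu (monomial t 1))⁻¹ • mu, fun i A => hN _ (hfN i A), by simp [hmu], fun d hd hne => ?_⟩
  refine hN _ ?_
  by_cases hdiv : ∃ i, purePowers t i ≤ d
  · obtain ⟨i, hi⟩ := hdiv
    obtain ⟨A, -, R, hR, hAR⟩ := (hf i).exists_monomial_eq hi
    exact hAR ▸ add_mem (hfN i A) (Submodule.mem_sup_left (weightLT_mono hd hR))
  · have hdt : d ≤ t := fun i => not_lt.1 fun h => hdiv ⟨i, purePowers_le_iff.2 h⟩
    exact Submodule.mem_sup_left
      (monomial_mem_weightLT (weight_lt_weight_of_lt hw (hdt.lt_of_ne hne)) 1)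

end RemainderUniqueness

section WeightedGrowth

open Bornology (cobounded)
open Filter Asymptotics
open Finsupp (weight)

variable {σ 𝕜 : Type*} [Fintype σ] [NormedField 𝕜] {w : σ → ℕ} {z : σ → 𝕜}

/-- The size of a point of `𝕜 ^ σ` whose `i`-th coordinate has weight `w i`:
the maximum of the `‖z i‖ ^ (1 / w i)`. -/
noncomputable def weightedGauge (w : σ → ℕ) (z : σ → 𝕜) : ℝ :=
  ‖fun i => ‖z i‖ ^ (w i : ℝ)⁻¹‖

lemma weightedGauge_nonneg : 0 ≤ weightedGauge w z := norm_nonneg _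

lemma norm_le_weightedGauge_pow {i : σ} (hw : w i ≠ 0) : ‖z i‖ ≤ weightedGauge w z ^ w i := by
  have h : ‖z i‖ ^ (w i : ℝ)⁻¹ ≤ weightedGauge w z :=
    (le_abs_self _).trans (norm_le_pi_norm (fun i => ‖z i‖ ^ (w i : ℝ)⁻¹) i)
  calc ‖z i‖ = (‖z i‖ ^ (w i : ℝ)⁻¹) ^ w i := (Real.rpow_inv_natCast_pow (norm_nonneg _) hw).symm
    _ ≤ weightedGauge w z ^ w i := by gcongr

lemma exists_norm_eq_weightedGauge_pow [Nonempty σ] (hw : ∀ i, w i ≠ 0) :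
    ∃ i, ‖z i‖ = weightedGauge w z ^ w i := by
  obtain ⟨i, -, hi⟩ := Finset.exists_mem_eq_sup Finset.univ Finset.univ_nonempty
    fun i => ‖‖z i‖ ^ (w i : ℝ)⁻¹‖₊
  refine ⟨i, ?_⟩
  have h : weightedGauge w z = ‖z i‖ ^ (w i : ℝ)⁻¹ := by
    rw [weightedGauge, Pi.norm_def, hi, coe_nnnorm, Real.norm_of_nonneg (by positivity)]
  rw [h, Real.rpow_inv_natCast_pow (norm_nonneg _) (hw i)]

lemma tendsto_weightedGauge_cobounded (hw : ∀ i, w i ≠ 0) :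
    Tendsto (weightedGauge w) (cobounded (σ → 𝕜)) atTop := by
  refine tendsto_atTop.2 fun M => ?_
  rw [Filter.Eventually, ← Bornology.isCobounded_def, ← Bornology.isBounded_compl_iff]
  refine (Bornology.IsBounded.pi fun i => Metric.isBounded_closedBall (x := (0 : 𝕜))
    (r := M ^ w i)).subset fun z (hz : ¬M ≤ weightedGauge w z) i _ => ?_
  rw [mem_closedBall_zero_iff]
  exact (norm_le_weightedGauge_pow (hw i)).trans
    (pow_le_pow_left₀ weightedGauge_nonneg (not_le.1 hz).le _)

lemma norm_monomial_le_weightedGauge_pow (hw : ∀ i, w i ≠ 0) (d : σ →₀ ℕ) :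
    ‖∏ i, z i ^ d i‖ ≤ weightedGauge w z ^ weight w d := by
  calc ‖∏ i, z i ^ d i‖ = ∏ i, ‖z i‖ ^ d i := by simp
    _ ≤ ∏ i, (weightedGauge w z ^ w i) ^ d i := by
      gcongr with i
      exact norm_le_weightedGauge_pow (hw i)
    _ = weightedGauge w z ^ weight w d := by
      simp only [← pow_mul, Finset.prod_pow_eq_pow_sum, Finsupp.weight_eq_sum, smul_eq_mul,
        mul_comm]

lemma isLittleO_eval_weightedGauge_pow (hw : ∀ i, w i ≠ 0) {k : ℕ} {H : MvPolynomial σ 𝕜}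
    (hH : H ∈ weightLT 𝕜 w k) :
    (fun z => eval z H) =o[cobounded (σ → 𝕜)] fun z => weightedGauge w z ^ k := by
  simp only [eval_eq']
  refine IsLittleO.fun_sum fun d hd => IsLittleO.const_mul_left ?_ _
  refine IsBigO.trans_isLittleO (.of_norm_le fun z => norm_monomial_le_weightedGauge_pow hw d) ?_
  exact (isLittleO_pow_pow_atTop_of_lt (mem_weightLT.1 hH d (mem_support_iff.1 hd))).comp_tendsto
    (tendsto_weightedGauge_cobounded hw)

/-- Each large point has a coordinate comparable to its size. -/
lemma eq_bot_of_isLittleO_weightedGauge_pow {α : Type*} [Nonempty σ] (hw : ∀ i, w i ≠ 0)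
    {l : Filter α} {u : α → σ → 𝕜} (hu : Tendsto u l (cobounded (σ → 𝕜))) {n : σ → ℕ}
    (h : ∀ i, (fun a => u a i ^ n i) =o[l] fun a => weightedGauge w (u a) ^ (w i * n i)) :
    l = ⊥ := by
  have hsmall (i : σ) := (h i).def (one_half_pos (α := ℝ))
  refine eventually_false_iff_eq_bot.1 ?_
  filter_upwards [eventually_all.2 hsmall,
    ((tendsto_weightedGauge_cobounded hw).comp hu).eventually_gt_atTop 0] with a ha hpos
  obtain ⟨i, hi⟩ := exists_norm_eq_weightedGauge_pow (z := u a) hw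
  have hlt : 0 < weightedGauge w (u a) ^ (w i * n i) := pow_pos hpos _
  have := ha i
  rw [norm_pow, hi, ← pow_mul, Real.norm_of_nonneg hlt.le] at this
  linarith

end WeightedGrowth

section Derivatives

open Finsupp (weight)

variable {σ K : Type*} {w : σ → ℕ}

lemma weight_tsub_single_add {d : σ →₀ ℕ} {i : σ} (h : d i ≠ 0) :
    weight w (d - Finsupp.single i 1) + w i = weight w d := by
  rw [← weight_tsub_add (Finsupp.single_le_iff.2 (Nat.one_le_iff_ne_zero.2 h)),
    Finsupp.weight_single, one_smul]

lemma pderiv_mem_weightLT [CommSemiring K] {k : ℕ} {H : MvPolynomial σ K}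
    (hH : H ∈ weightLT K w k) (i : σ) : pderiv i H ∈ weightLT K w (k - w i) := by
  rw [H.as_sum, map_sum]
  refine sum_mem fun d hd => ?_
  rw [pderiv_monomial]
  by_cases hdi : d i = 0
  · simp [hdi]
  · have := mem_weightLT.1 hH d (mem_support_iff.1 hd)
    have := weight_tsub_single_add (w := w) hdi
    exact monomial_mem_weightLT (by omega) _

lemma HasLeadingMonomial.pderiv [Field K] {f : MvPolynomial σ K} {e : σ →₀ ℕ} {i : σ}
    (hf : HasLeadingMonomial w f e) (he : (e i : K) ≠ 0) :
    HasLeadingMonomial w (pderiv i f) (e - Finsupp.single i 1) := by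
  obtain ⟨c, hc, hfc⟩ := hf
  refine ⟨c * e i, mul_ne_zero hc he, ?_⟩
  have hei := weight_tsub_single_add (w := w) (i := i) fun h => he (by rw [h, Nat.cast_zero])
  rw [← pderiv_monomial, ← map_sub, Nat.eq_sub_of_add_eq hei]
  exact pderiv_mem_weightLT hfc i

end Derivatives

section LeadingMonomialGrowth

open Bornology (cobounded)
open Filter Asymptotics
open Finsupp (weight)

variable {σ 𝕜 : Type*} [Fintype σ] [NormedField 𝕜] {w : σ → ℕ}

lemma HasLeadingMonomial.isBigO_eval (hw : ∀ i, w i ≠ 0) {f : MvPolynomial σ 𝕜} {e : σ →₀ ℕ}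
    (hf : HasLeadingMonomial w f e) {l : Filter (σ → 𝕜)} (hl : l ≤ cobounded (σ → 𝕜))
    (he : (fun z => weightedGauge w z ^ weight w e) =O[l] fun z => ∏ i, z i ^ e i) :
    (fun z => weightedGauge w z ^ weight w e) =O[l] fun z => eval z f := by
  obtain ⟨c, hc, hfc⟩ := hf
  have hlow := (isLittleO_eval_weightedGauge_pow hw hfc).mono hl
  have hmon : (fun z => weightedGauge w z ^ weight w e) =O[l] fun z => eval z (monomial e c) := by
    simpa only [eval_monomial, Finsupp.prod_fintype _ _ fun _ => pow_zero _] using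
      he.trans (isBigO_self_const_mul hc _ l)
  refine hmon.trans ((hlow.trans_isBigO hmon).right_isBigO_add.congr_right fun z => ?_)
  rw [eval_sub, sub_add_cancel]

end LeadingMonomialGrowth

section WeierstrassPolynomials

open Finsupp (weight)

variable {K : Type*} [Field K] {p q : ℕ} {F A : MvPolynomial (Fin 2) K}

lemma weight_pair (d : Fin 2 →₀ ℕ) : weight ![p, q] d = d 0 * p + d 1 * q := by
  simp [Finsupp.weight_eq_sum, Fin.sum_univ_two]

/-- `F` is a normed Weierstraß polynomial of type `p, q`: its leading form is `Y ^ p - X ^ q`,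
where `X = X 0` and `Y = X 1` have the weights `p` and `q`. -/
def IsWeierstrass (p q : ℕ) (F : MvPolynomial (Fin 2) K) : Prop :=
  F - (X 1 ^ p - X 0 ^ q) ∈ weightLT K ![p, q] (p * q)

/-- The exponent of `X ^ (q - 2) * Y ^ (p - 2)`, which spans the socle of the Milnor algebra
of `Y ^ p - X ^ q`. -/
noncomputable def milnorSocle (p q : ℕ) : Fin 2 →₀ ℕ :=
  Finsupp.single 0 (q - 2) + Finsupp.single 1 (p - 2)

lemma purePowers_milnorSocle_zero (hq : 1 < q) :
    purePowers (milnorSocle p q) 0 = Finsupp.single 0 (q - 1) := by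
  simp [purePowers, milnorSocle, show q - 2 + 1 = q - 1 by omega]

lemma purePowers_milnorSocle_one (hp : 1 < p) :
    purePowers (milnorSocle p q) 1 = Finsupp.single 1 (p - 1) := by
  simp [purePowers, milnorSocle, show p - 2 + 1 = p - 1 by omega]

namespace IsWeierstrass

lemma hasLeadingMonomial_sub_X_one_pow (hF : IsWeierstrass p q F) :
    HasLeadingMonomial ![p, q] (F - X 1 ^ p) (Finsupp.single 0 q) := by
  refine ⟨-1, neg_ne_zero.2 one_ne_zero, ?_⟩
  rw [map_neg, ← X_pow_eq_monomial, Finsupp.weight_single]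
  simpa [IsWeierstrass, sub_add, mul_comm] using hF

lemma hasLeadingMonomial_add_X_zero_pow (hF : IsWeierstrass p q F) :
    HasLeadingMonomial ![p, q] (F + X 0 ^ q) (Finsupp.single 1 p) := by
  refine ⟨1, one_ne_zero, ?_⟩
  rw [← X_pow_eq_monomial, Finsupp.weight_single]
  simpa [IsWeierstrass, add_sub_assoc, sub_sub_eq_add_sub] using hF

lemma hasLeadingMonomial_pderiv [CharZero K] (hF : IsWeierstrass p q F) (hp : 1 < p) (hq : 1 < q)
    (i : Fin 2) : HasLeadingMonomial ![p, q] (pderiv i F) (purePowers (milnorSocle p q) i) := by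
  match i with
  | 0 =>
    have h := hF.hasLeadingMonomial_sub_X_one_pow.pderiv (i := 0) (by simp; omega)
    simpa [pderiv_X, pderiv_pow, purePowers_milnorSocle_zero hq, ← Finsupp.single_tsub] using h
  | 1 =>
    have h := hF.hasLeadingMonomial_add_X_zero_pow.pderiv (i := 1) (by simp; omega)
    simpa [pderiv_X, pderiv_pow, purePowers_milnorSocle_one hp, ← Finsupp.single_tsub] using h

lemma mem_weightLT (hF : IsWeierstrass p q F) : F ∈ weightLT K ![p, q] (p * q + 1) := by
  have h1 : (X 1 ^ p : MvPolynomial (Fin 2) K) ∈ weightLT K ![p, q] (p * q + 1) := by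
    rw [X_pow_eq_monomial]
    exact monomial_mem_weightLT (by simp [weight_pair]) 1
  have h0 : (X 0 ^ q : MvPolynomial (Fin 2) K) ∈ weightLT K ![p, q] (p * q + 1) := by
    rw [X_pow_eq_monomial]
    exact monomial_mem_weightLT (by simp [weight_pair, mul_comm]) 1
  simpa using add_mem (weightLT_mono (Nat.le_succ _) hF) (sub_mem h1 h0)

end IsWeierstrass

end WeierstrassPolynomials

section CurveAtInfinity

open Bornology (cobounded)
open Filter Asymptotics

variable {𝕜 : Type*} [NormedField 𝕜] {p q : ℕ} {F A : MvPolynomial (Fin 2) 𝕜}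

/-- The affine plane curve `F = 0`. -/
def curve (F : MvPolynomial (Fin 2) 𝕜) : Set (Fin 2 → 𝕜) := {z | eval z F = 0}

lemma pair_ne_zero (hp : p ≠ 0) (hq : q ≠ 0) (i : Fin 2) : (![p, q] : Fin 2 → ℕ) i ≠ 0 := by
  fin_cases i <;> assumption

namespace IsWeierstrass

lemma isBigO_coord_one (hF : IsWeierstrass p q F) (hp : p ≠ 0) (hq : q ≠ 0) :
    (fun z => weightedGauge ![p, q] z ^ q) =O[cobounded (Fin 2 → 𝕜) ⊓ 𝓟 (curve F)]
      fun z => z 1 := by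
  have hlow := (isLittleO_eval_weightedGauge_pow (pair_ne_zero hp hq) hF).mono
    (inf_le_left (b := 𝓟 (curve F)))
  have hbound : ∀ᶠ z in cobounded (Fin 2 → 𝕜) ⊓ 𝓟 (curve F),
      ‖(weightedGauge ![p, q] z ^ q) ^ p‖ ≤ 2 * ‖z 1 ^ p‖ := by
    filter_upwards [hlow.def one_half_pos, mem_inf_of_right (mem_principal_self _)] with z hz hzF
    simp only [curve, Set.mem_ofPred_eq] at hzF
    simp only [eval_sub, hzF, eval_pow, eval_X, zero_sub, neg_sub] at hz
    rw [← pow_mul, mul_comm q p]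
    obtain ⟨i, hi⟩ := exists_norm_eq_weightedGauge_pow (z := z) (pair_ne_zero hp hq)
    have hnonneg : 0 ≤ weightedGauge ![p, q] z ^ (p * q) := pow_nonneg weightedGauge_nonneg _
    rw [Real.norm_of_nonneg hnonneg] at hz ⊢
    match i with
    | 0 =>
      have h0 : ‖z 0 ^ q‖ = weightedGauge ![p, q] z ^ (p * q) := by
        rw [norm_pow, hi, ← pow_mul]; rfl
      have := norm_sub_norm_le (z 0 ^ q) (z 1 ^ p)
      linarith
    | 1 =>
      have h1 : ‖z 1 ^ p‖ = weightedGauge ![p, q] z ^ (p * q) := by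
        rw [norm_pow, hi, ← pow_mul, mul_comm p q]; rfl
      linarith
  exact (IsBigO.of_bound 2 hbound).of_pow hp

variable [CharZero 𝕜]

lemma isBigO_eval_pderiv_one (hF : IsWeierstrass p q F) (hp : 1 < p) (hq : 1 < q) :
    (fun z => weightedGauge ![p, q] z ^ ((p - 1) * q)) =O[cobounded (Fin 2 → 𝕜) ⊓ 𝓟 (curve F)]
      fun z => eval z (pderiv 1 F) := by
  have hY := (hF.isBigO_coord_one (by omega) (by omega)).pow (p - 1)
  have hlead := hF.hasLeadingMonomial_pderiv hp hq 1
  rw [purePowers_milnorSocle_one hp] at hlead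
  simpa [weight_pair] using hlead.isBigO_eval (pair_ne_zero (by omega) (by omega)) inf_le_left
    (by simpa [weight_pair, Fin.prod_univ_two, pow_mul, pow_right_comm] using hY)

lemma isLittleO_eval_pderiv_one (hF : IsWeierstrass p q F) (hp : 1 < p) (hq : 1 < q)
    (hA : A ∈ weightLT 𝕜 ![p, q] ((p - 1) * q)) :
    (fun z => eval z A) =o[cobounded (Fin 2 → 𝕜) ⊓ 𝓟 (curve F)] fun z => eval z (pderiv 1 F) :=
  ((isLittleO_eval_weightedGauge_pow (pair_ne_zero (by omega) (by omega)) hA).mono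
    inf_le_left).trans_isBigO (hF.isBigO_eval_pderiv_one hp hq)

lemma eventually_eval_pderiv_one_ne_zero (hF : IsWeierstrass p q F) (hp : 1 < p) (hq : 1 < q) :
    ∀ᶠ z in cobounded (Fin 2 → 𝕜) ⊓ 𝓟 (curve F), eval z (pderiv 1 F) ≠ 0 := by
  have hpos := ((tendsto_weightedGauge_cobounded (𝕜 := 𝕜)
    (pair_ne_zero (p := p) (q := q) (by omega) (by omega))).mono_left
      (inf_le_left (b := 𝓟 (curve F)))).eventually_gt_atTop 0
  filter_upwards [hpos, (hF.isBigO_eval_pderiv_one hp hq).eq_zero_imp] with z hz hzero h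
  exact (pow_pos hz _).ne' (hzero h)

end IsWeierstrass

end CurveAtInfinity

section PolynomialMaps

open Filter Asymptotics Topology

lemma isBigO_sub_of_injective_fderiv {𝕜 E E' : Type*} [NontriviallyNormedField 𝕜]
    [CompleteSpace 𝕜] [NormedAddCommGroup E] [NormedSpace 𝕜 E] [FiniteDimensional 𝕜 E]
    [NormedAddCommGroup E'] [NormedSpace 𝕜 E'] {f : E → E'} {f' : E →L[𝕜] E'} {a : E}
    (hf : HasStrictFDerivAt f f' a) (hinj : Function.Injective f') :
    (fun u : E × E => u.1 - u.2) =O[𝓝 (a, a)] fun u => f u.1 - f u.2 := by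
  obtain ⟨C, -, hC⟩ := (f' : E →ₗ[𝕜] E').exists_antilipschitzWith (LinearMap.ker_eq_bot.2 hinj)
  have hlin : (fun u : E × E => u.1 - u.2) =O[𝓝 (a, a)] fun u => f' (u.1 - u.2) :=
    .of_bound C (.of_forall fun u => by simpa using hC.le_mul_dist (u.1 - u.2) 0)
  simpa using hlin.trans (hf.isLittleO.trans_isBigO hlin).right_isBigO_add

lemma isBigO_of_mul_add_mul_eq_zero {ι 𝕜 : Type*} [NormedField 𝕜] {l : Filter ι}
    {A B f g : ι → 𝕜} (h : ∀ᶠ a in l, A a * f a + B a * g a = 0)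
    (hA : A =O[l] fun a => (f a, g a)) (hB : B =O[l] fun a => (f a, g a)) : A =O[l] g := by
  obtain ⟨C, hC⟩ := hA.bound
  obtain ⟨C', hC'⟩ := hB.bound
  refine .of_bound (max C C') ?_
  filter_upwards [h, hC, hC'] with a ha hAa hBa
  rw [Prod.norm_def] at hAa hBa
  obtain hle | hlt := le_or_gt ‖f a‖ ‖g a‖
  · rw [max_eq_right hle] at hAa
    exact hAa.trans (by gcongr; exact le_max_left ..)
  · rw [max_eq_left hlt.le] at hBa
    refine le_of_mul_le_mul_right ?_ ((norm_nonneg _).trans_lt hlt)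
    calc ‖A a‖ * ‖f a‖ = ‖B a‖ * ‖g a‖ := by
          rw [← norm_mul, ← norm_mul, eq_neg_of_add_eq_zero_left ha, norm_neg]
      _ ≤ max C C' * ‖f a‖ * ‖g a‖ := by
          gcongr; exact hBa.trans (by gcongr; exact le_max_right ..)
      _ = max C C' * ‖g a‖ * ‖f a‖ := by ring

variable {σ 𝕜 : Type*} [Fintype σ] [NontriviallyNormedField 𝕜]

/-- The differential at `z` of the polynomial function of `G`. -/
noncomputable def evalDeriv (G : MvPolynomial σ 𝕜) (z : σ → 𝕜) : (σ → 𝕜) →L[𝕜] 𝕜 :=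
  ∑ i, eval z (pderiv i G) • ContinuousLinearMap.proj i

@[simp]
lemma evalDeriv_apply (G : MvPolynomial σ 𝕜) (z u : σ → 𝕜) :
    evalDeriv G z u = ∑ i, eval z (pderiv i G) * u i := by
  simp [evalDeriv]

lemma hasStrictFDerivAt_eval (G : MvPolynomial σ 𝕜) (z : σ → 𝕜) :
    HasStrictFDerivAt (fun z => eval z G) (evalDeriv G z) z := by
  classical
  induction G using MvPolynomial.induction_on with
  | C a =>
    have h : evalDeriv (C a) z = 0 := by ext; simp
    simpa only [eval_C, h] using hasStrictFDerivAt_const a z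
  | add G H hG hH =>
    have h : evalDeriv (G + H) z = evalDeriv G z + evalDeriv H z := by
      ext; simp [add_mul, Finset.sum_add_distrib]
    simpa only [eval_add, h] using hG.fun_add hH
  | mul_X G i hG =>
    have h : evalDeriv (G * X i) z =
        eval z G • ContinuousLinearMap.proj i + z i • evalDeriv G z := by
      ext u
      simp [pderiv_X, Pi.single_apply, apply_ite (eval z), add_mul, Finset.sum_add_distrib,
        Finset.mul_sum, mul_assoc]
    have hX := (ContinuousLinearMap.proj (R := 𝕜) (φ := fun _ : σ => 𝕜) i).hasStrictFDerivAt
      (x := z)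
    simp only [eval_mul, eval_X, h]
    exact hG.fun_mul hX

end PolynomialMaps

section PlanePolynomials

open Filter Asymptotics Topology

lemma pderiv_comm {σ R : Type*} [CommSemiring R] (i j : σ) (G : MvPolynomial σ R) :
    pderiv i (pderiv j G) = pderiv j (pderiv i G) := by
  classical
  induction G using MvPolynomial.induction_on with
  | C a => simp
  | add G H hG hH => simp only [map_add, hG, hH]
  | mul_X G k hG =>
    simp only [pderiv_mul, map_add, hG, pderiv_X, Pi.single_apply]
    split_ifs <;> simp [add_right_comm]

/-- The Jacobian determinant `f_X g_Y - f_Y g_X` of a pair of polynomials in `X, Y`. -/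
noncomputable def jacobian {K : Type*} [CommRing K] (f g : MvPolynomial (Fin 2) K) :
    MvPolynomial (Fin 2) K :=
  pderiv 0 f * pderiv 1 g - pderiv 1 f * pderiv 0 g

lemma hessPoly_eq_jacobian {K : Type} [CommRing K] (G : MvPolynomial (Fin 2) K) :
    hessPoly K G = jacobian (pderiv 0 G) (pderiv 1 G) := by
  rw [hessPoly, jacobian, pow_two, pderiv_comm 0 1]

variable {𝕜 : Type*} [NontriviallyNormedField 𝕜] {f g A B F : MvPolynomial (Fin 2) 𝕜}
  {z : Fin 2 → 𝕜}

lemma evalDeriv_prod_bijective (h : eval z (jacobian f g) ≠ 0) :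
    Function.Bijective ((evalDeriv f z).prod (evalDeriv g z)) := by
  rw [jacobian, eval_sub, eval_mul, eval_mul] at h
  set J := eval z (pderiv 0 f) * eval z (pderiv 1 g) - eval z (pderiv 1 f) * eval z (pderiv 0 g)
    with hJ
  constructor
  · rw [injective_iff_map_eq_zero]
    intro u hu
    simp only [ContinuousLinearMap.prod_apply, evalDeriv_apply, Fin.sum_univ_two,
      Prod.mk_eq_zero] at hu
    refine funext (Fin.forall_fin_two.2 ⟨mul_left_cancel₀ h ?_, mul_left_cancel₀ h ?_⟩)
    · simp only [Pi.zero_apply]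
      linear_combination u 0 * hJ + eval z (pderiv 1 g) * hu.1 - eval z (pderiv 1 f) * hu.2
    · simp only [Pi.zero_apply]
      linear_combination u 1 * hJ + eval z (pderiv 0 f) * hu.2 - eval z (pderiv 0 g) * hu.1
  · rintro ⟨a, b⟩
    refine ⟨![(eval z (pderiv 1 g) * a - eval z (pderiv 1 f) * b) / J,
      (eval z (pderiv 0 f) * b - eval z (pderiv 0 g) * a) / J], ?_⟩
    simp only [ContinuousLinearMap.prod_apply, evalDeriv_apply, Fin.sum_univ_two,
      Matrix.cons_val_zero, Matrix.cons_val_one, Prod.mk.injEq]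
    constructor
    · field_simp
      linear_combination -a * hJ
    · field_simp
      linear_combination -b * hJ

lemma isBigO_eval_of_eval_ne_zero (h : (eval z f, eval z g) ≠ 0) :
    (fun w => eval w A) =O[𝓝 z] fun w => (eval w f, eval w g) := by
  have hpair : Tendsto (fun w => (eval w f, eval w g)) (𝓝 z) (𝓝 (eval z f, eval z g)) :=
    (f.continuous_eval.prodMk g.continuous_eval).tendsto z
  refine (A.continuous_eval.tendsto z).isBigO_one ℝ |>.trans ?_
  refine (isBigO_const_left_iff_pos_le_norm one_ne_zero).2
    ⟨‖(eval z f, eval z g)‖ / 2, by positivity, ?_⟩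
  exact (hpair.norm.eventually_const_lt (half_lt_self (norm_pos_iff.2 h))).mono fun _ => le_of_lt

variable [CompleteSpace 𝕜]

lemma isBigO_eval_of_transversal (hf : eval z f = 0) (hg : eval z g = 0) (hA : eval z A = 0)
    (h : eval z (jacobian f g) ≠ 0) :
    (fun w => eval w A) =O[𝓝 z] fun w => (eval w f, eval w g) := by
  have hfg := isBigO_sub_of_injective_fderiv
    ((hasStrictFDerivAt_eval f z).prodMk (hasStrictFDerivAt_eval g z))
    (evalDeriv_prod_bijective h).injective
  have hsub : (fun w => w - z) =O[𝓝 z] fun w => (eval w f, eval w g) := by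
    simpa [Function.comp_def, hf, hg] using
      hfg.comp_tendsto (tendsto_id.prodMk_nhds (tendsto_const_nhds (x := z)))
  simpa [hA] using (hasStrictFDerivAt_eval A z).hasFDerivAt.isBigO_sub.trans hsub

-- Off the common zeros of `f` and `g` this is continuity; at such a zero `A` and `B` are
-- dominated by `(f, g)`, and the relation turns this into domination by `g` alone.
lemma isBigO_nhdsWithin_curve
    (hAB : ∀ z ∈ curve F, eval z A * eval z f + eval z B * eval z g = 0)
    (hz : eval z f = 0 → eval z g = 0 →
      eval z A = 0 ∧ eval z B = 0 ∧ eval z (jacobian f g) ≠ 0) :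
    (fun w => eval w A) =O[𝓝[curve F] z] fun w => eval w g := by
  have hdom (H : MvPolynomial (Fin 2) 𝕜) (hH : eval z f = 0 → eval z g = 0 → eval z H = 0) :
      (fun w => eval w H) =O[𝓝[curve F] z] fun w => (eval w f, eval w g) := by
    refine IsBigO.mono ?_ nhdsWithin_le_nhds
    by_cases h : (eval z f, eval z g) = 0
    · obtain ⟨hf, hg⟩ := Prod.mk_eq_zero.1 h
      exact isBigO_eval_of_transversal hf hg (hH hf hg) (hz hf hg).2.2
    · exact isBigO_eval_of_eval_ne_zero h
  exact isBigO_of_mul_add_mul_eq_zero (eventually_nhdsWithin_of_forall hAB)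
    (hdom A fun hf hg => (hz hf hg).1) (hdom B fun hf hg => (hz hf hg).2.1)

end PlanePolynomials

section Cocompact

open Filter Asymptotics Topology

lemma isBigO_principal_of_nhdsWithin_of_cocompact {X E E' : Type*} [TopologicalSpace X]
    [SeminormedAddCommGroup E] [SeminormedAddCommGroup E'] {f : X → E} {g : X → E'} {s : Set X}
    (hs : IsClosed s) (hloc : ∀ x ∈ s, f =O[𝓝[s] x] g) (hinf : f =O[cocompact X ⊓ 𝓟 s] g) :
    f =O[𝓟 s] g := by
  obtain ⟨C, hC⟩ := hinf.bound
  obtain ⟨K, hK, hKC⟩ := mem_cocompact.1 (eventually_inf_principal.1 hC)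
  have hcompact : f =O[𝓟 (K ∩ s)] g := by
    refine (hK.inter_right hs).induction_on (p := fun t => f =O[𝓟 t] g) (by simp) ?_ ?_ ?_
    · exact fun t u htu hu => hu.mono (principal_mono.2 htu)
    · exact fun t u ht hu => by simpa only [← sup_principal] using ht.sup hu
    · intro x hx
      obtain ⟨C', hC'⟩ :=
        ((hloc x hx.2).mono (nhdsWithin_mono x Set.inter_subset_right)).bound
      exact ⟨_, hC', .of_bound C' (eventually_principal.2 fun y hy => hy)⟩
  have hcompl : f =O[𝓟 (Kᶜ ∩ s)] g :=
    .of_bound C (eventually_principal.2 fun y hy => hKC hy.1 hy.2)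
  simpa [← Set.union_inter_distrib_right] using hcompact.sup hcompl

end Cocompact

section PolynomialsInY

variable {K : Type*} [Field K] {p q : ℕ} {F H : MvPolynomial (Fin 2) K}

lemma pair_eta {X : Type*} (z : Fin 2 → X) : ![z 0, z 1] = z :=
  List.ofFn_inj.1 rfl

/-- A polynomial in `X, Y` viewed as a polynomial in `Y` with coefficients in `K[X]`. -/
noncomputable def polyInY : MvPolynomial (Fin 2) K →ₐ[K] Polynomial (Polynomial K) :=
  aeval ![Polynomial.C Polynomial.X, Polynomial.X]

/-- The polynomial `G(x, Y)`, whose roots are the ordinates of the points above `x`. -/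
noncomputable def fiberPoly (G : MvPolynomial (Fin 2) K) (x : K) : Polynomial K :=
  (polyInY G).map (Polynomial.evalRingHom x)

lemma eval_fiberPoly (G : MvPolynomial (Fin 2) K) (x y : K) :
    (fiberPoly G x).eval y = eval ![x, y] G := by
  unfold fiberPoly
  induction G using MvPolynomial.induction_on with
  | C a => simp [polyInY, Polynomial.algebraMap_apply]
  | add G H hG hH => simp only [map_add, Polynomial.map_add, Polynomial.eval_add, hG, hH]
  | mul_X G i hG =>
    simp only [map_mul, Polynomial.map_mul, Polynomial.eval_mul, hG]
    fin_cases i <;> simp [polyInY]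

lemma derivative_polyInY (G : MvPolynomial (Fin 2) K) :
    Polynomial.derivative (polyInY G) = polyInY (pderiv 1 G) := by
  induction G using MvPolynomial.induction_on with
  | C a => simp [polyInY, Polynomial.algebraMap_apply]
  | add G H hG hH => simp only [map_add, hG, hH]
  | mul_X G i hG =>
    rw [pderiv_mul, map_mul, Polynomial.derivative_mul, hG, map_add, map_mul, map_mul]
    fin_cases i <;> simp [polyInY]

lemma derivative_fiberPoly (G : MvPolynomial (Fin 2) K) (x : K) :
    Polynomial.derivative (fiberPoly G x) = fiberPoly (pderiv 1 G) x := by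
  rw [fiberPoly, Polynomial.derivative_map, derivative_polyInY, fiberPoly]

lemma eq_zero_of_infinite_fiberPoly_eq_zero [Infinite K]
    (h : {x | fiberPoly H x = 0}.Infinite) : H = 0 := by
  have hpoly : polyInY H = 0 := by
    ext1 k
    refine Polynomial.eq_zero_of_infinite_isRoot _ (h.mono fun x hx => ?_)
    simpa [fiberPoly, Polynomial.coeff_map] using congrArg (fun f => Polynomial.coeff f k) hx
  refine MvPolynomial.funext fun z => ?_
  rw [← pair_eta z, ← eval_fiberPoly, fiberPoly, hpoly]
  simp

lemma degree_polyInY_lt (hH : H ∈ weightLT K ![p, q] (p * q)) : (polyInY H).degree < p := by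
  rw [← Polynomial.mem_degreeLT, H.as_sum, map_sum]
  refine sum_mem fun d hd => ?_
  have hdw := mem_weightLT.1 hH d (mem_support_iff.1 hd)
  rw [weight_pair] at hdw
  have hdp : d 1 < p := lt_of_mul_lt_mul_right ((Nat.le_add_left ..).trans_lt hdw) (Nat.zero_le q)
  have hmon : polyInY (monomial d (coeff d H)) =
      Polynomial.C (Polynomial.C (coeff d H) * Polynomial.X ^ d 0) * Polynomial.X ^ d 1 := by
    simp [polyInY, aeval_monomial, Finsupp.prod_fintype, Polynomial.algebraMap_apply, mul_assoc]
  rw [Polynomial.mem_degreeLT, hmon]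
  exact (Polynomial.degree_C_mul_X_pow_le _ _).trans_lt (by exact_mod_cast hdp)

namespace IsWeierstrass

lemma exists_polyInY_eq (hF : IsWeierstrass p q F) (hp : p ≠ 0) :
    ∃ R : Polynomial (Polynomial K), R.degree < p ∧ polyInY F = Polynomial.X ^ p + R := by
  refine ⟨polyInY (F - (X 1 ^ p - X 0 ^ q)) - Polynomial.C (Polynomial.X ^ q), ?_, ?_⟩
  · exact (Polynomial.degree_sub_le _ _).trans_lt (max_lt (degree_polyInY_lt hF)
      (Polynomial.degree_C_le.trans_lt (by exact_mod_cast Nat.pos_of_ne_zero hp)))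
  · have hmodel : polyInY (X 1 ^ p - X 0 ^ q : MvPolynomial (Fin 2) K) =
        Polynomial.X ^ p - Polynomial.C (Polynomial.X ^ q) := by
      simp [polyInY]
    rw [map_sub, hmodel]
    ring

lemma monic_polyInY (hF : IsWeierstrass p q F) (hp : p ≠ 0) : (polyInY F).Monic := by
  obtain ⟨R, hR, h⟩ := hF.exists_polyInY_eq hp
  exact h ▸ Polynomial.monic_X_pow_add hR

lemma natDegree_polyInY (hF : IsWeierstrass p q F) (hp : p ≠ 0) : (polyInY F).natDegree = p := by
  obtain ⟨R, hR, h⟩ := hF.exists_polyInY_eq hp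
  rw [h, Polynomial.natDegree_add_eq_left_of_degree_lt (by simpa using hR),
    Polynomial.natDegree_X_pow]

end IsWeierstrass

end PolynomialsInY

section Fibers

open Filter Asymptotics
open Bornology (cobounded)

variable {𝕜 : Type*} [NontriviallyNormedField 𝕜] {p q : ℕ} {F A B H : MvPolynomial (Fin 2) 𝕜}

lemma natDegree_eq_zero_of_norm_eval_le {N : Polynomial 𝕜} {C : ℝ} (h : ∀ x, ‖N.eval x‖ ≤ C) :
    N.natDegree = 0 := by
  by_contra hne
  have hN := N.tendsto_norm_atTop (Polynomial.natDegree_pos_iff_degree_pos.1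
    (Nat.pos_of_ne_zero hne)) (tendsto_norm_cobounded_atTop (E := 𝕜))
  obtain ⟨x, hx⟩ := (hN.eventually_gt_atTop C).exists
  exact (h x).not_gt hx

lemma norm_eval_le_of_X_sub_C_mul {N D : Polynomial 𝕜} {C : ℝ} {a : 𝕜}
    (h : ∀ x, ‖((Polynomial.X - Polynomial.C a) * N).eval x‖ ≤
      C * ‖((Polynomial.X - Polynomial.C a) * D).eval x‖) (x : 𝕜) :
    ‖N.eval x‖ ≤ C * ‖D.eval x‖ := by
  have hclosed : IsClosed {x : 𝕜 | ‖N.eval x‖ ≤ C * ‖D.eval x‖} := by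
    apply isClosed_le <;> fun_prop
  refine hclosed.closure_subset_iff.2 (fun y (hy : y ∈ ({a}ᶜ : Set 𝕜)) => ?_)
    ((dense_compl_singleton a).closure_eq ▸ Set.mem_univ x)
  have hya : 0 < ‖y - a‖ := norm_pos_iff.2 (sub_ne_zero.2 hy)
  refine le_of_mul_le_mul_left ?_ hya
  simpa [mul_left_comm] using h y

theorem exists_eq_C_mul_of_norm_eval_le [IsAlgClosed 𝕜] {N D : Polynomial 𝕜} {C : ℝ}
    (h : ∀ x, ‖N.eval x‖ ≤ C * ‖D.eval x‖) : ∃ c, N = Polynomial.C c * D := by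
  induction hn : D.natDegree generalizing N D with
  | zero =>
    obtain ⟨d, rfl⟩ := Polynomial.natDegree_eq_zero.1 hn
    simp only [Polynomial.eval_C] at h
    obtain ⟨b, rfl⟩ := Polynomial.natDegree_eq_zero.1 (natDegree_eq_zero_of_norm_eval_le h)
    refine ⟨b / d, ?_⟩
    rw [← Polynomial.C_mul, div_mul_cancel_of_imp fun hd => ?_]
    simpa [hd] using h 0
  | succ n ih =>
    obtain ⟨a, ha⟩ := IsAlgClosed.exists_root D fun h0 => by
      simp [Polynomial.natDegree_eq_of_degree_eq_some h0] at hn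
    have hNa : N.IsRoot a := by simpa [ha.eq_zero] using h a
    obtain ⟨D, rfl⟩ := Polynomial.dvd_iff_isRoot.2 ha
    obtain ⟨N, rfl⟩ := Polynomial.dvd_iff_isRoot.2 hNa
    have hD : D ≠ 0 := by rintro rfl; simp at hn
    rw [Polynomial.natDegree_mul (Polynomial.X_sub_C_ne_zero a) hD, Polynomial.natDegree_X_sub_C,
      add_comm, Nat.add_right_cancel_iff] at hn
    obtain ⟨c, rfl⟩ := ih (norm_eval_le_of_X_sub_C_mul h) hn
    exact ⟨c, by ring⟩

lemma norm_prod_map_le {ι : Type*} (s : Multiset ι) {a b : ι → 𝕜} {C : ℝ}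
    (h : ∀ y ∈ s, ‖a y‖ ≤ C * ‖b y‖) :
    ‖(s.map a).prod‖ ≤ C ^ s.card * ‖(s.map b).prod‖ := by
  induction s using Multiset.induction_on with
  | empty => simp
  | cons y s ih =>
    have hy := h y (Multiset.mem_cons_self y s)
    have hs := ih fun y hy => h y (Multiset.mem_cons_of_mem hy)
    simp only [Multiset.map_cons, Multiset.prod_cons, norm_mul, Multiset.card_cons]
    calc ‖a y‖ * ‖(s.map a).prod‖ ≤ (C * ‖b y‖) * (C ^ s.card * ‖(s.map b).prod‖) :=
          mul_le_mul hy hs (norm_nonneg _) ((norm_nonneg _).trans hy)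
      _ = C ^ (s.card + 1) * (‖b y‖ * ‖(s.map b).prod‖) := by ring

lemma mem_roots_fiberPoly (hF : (polyInY F).Monic) {x y : 𝕜} :
    y ∈ (fiberPoly F x).roots ↔ ![x, y] ∈ curve F := by
  rw [fiberPoly, Polynomial.mem_roots (hF.map _).ne_zero, Polynomial.IsRoot, ← fiberPoly,
    eval_fiberPoly, curve, Set.mem_ofPred_eq]

lemma nodup_roots_fiberPoly (hF : (polyInY F).Monic) {x : 𝕜}
    (h : ∀ z ∈ curve F, z 0 = x → eval z (pderiv 1 F) ≠ 0) : (fiberPoly F x).roots.Nodup := by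
  classical
  refine Multiset.nodup_iff_count_le_one.2 fun y => ?_
  rw [Polynomial.count_roots]
  by_contra! hlt
  have hne : fiberPoly F x ≠ 0 := (hF.map _).ne_zero
  obtain ⟨hroot, hderiv⟩ := (Polynomial.one_lt_rootMultiplicity_iff_isRoot hne).1 hlt
  refine h ![x, y] ?_ rfl ?_
  · rwa [Polynomial.IsRoot, eval_fiberPoly] at hroot
  · rwa [derivative_fiberPoly, Polynomial.IsRoot, eval_fiberPoly] at hderiv

/-- The points of the curve `F = 0` with abscissa tending to infinity. -/
def largeAbscissa (F : MvPolynomial (Fin 2) 𝕜) : Filter (Fin 2 → 𝕜) :=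
  comap (fun z => z 0) (cobounded 𝕜) ⊓ 𝓟 (curve F)

lemma eventually_largeAbscissa {P : (Fin 2 → 𝕜) → Prop} :
    (∀ᶠ z in largeAbscissa F, P z) ↔ ∀ᶠ x in cobounded 𝕜, ∀ z ∈ curve F, z 0 = x → P z := by
  rw [largeAbscissa, eventually_inf_principal, eventually_comap]
  simp only [imp.swap]

lemma largeAbscissa_le : largeAbscissa F ≤ cobounded (Fin 2 → 𝕜) ⊓ 𝓟 (curve F) :=
  inf_le_inf_right _ (LipschitzWith.eval 0).comap_cobounded_le

/-- The resultant of `F` and `H` with respect to `Y`: for `F` monic in `Y`, the norm of `H` from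
the coordinate ring of the curve `F = 0` down to `𝕜[X]`. -/
noncomputable def fiberNorm (F H : MvPolynomial (Fin 2) 𝕜) : Polynomial 𝕜 :=
  (polyInY F).resultant (polyInY H)

variable [IsAlgClosed 𝕜]

lemma eval_fiberNorm (hF : (polyInY F).Monic) (H : MvPolynomial (Fin 2) 𝕜) (x : 𝕜) :
    (fiberNorm F H).eval x = ((fiberPoly F x).roots.map fun y => eval ![x, y] H).prod := by
  have hres := Polynomial.resultant_eq_prod_eval (fiberPoly F x) (fiberPoly H x)
    (polyInY H).natDegree Polynomial.natDegree_map_le (IsAlgClosed.splits _)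
  have hm : (fiberPoly F x).Monic := hF.map _
  have hcongr := Polynomial.resultant_map_map (polyInY F) (polyInY H) (polyInY F).natDegree
    (polyInY H).natDegree (Polynomial.evalRingHom x)
  rw [Polynomial.coe_evalRingHom] at hcongr
  rw [hm.leadingCoeff, one_pow, one_mul] at hres
  rw [fiberNorm, ← hcongr, ← hF.natDegree_map (Polynomial.evalRingHom x)]
  simp only [eval_fiberPoly] at hres
  exact hres

lemma eval_fiberNorm_eq_zero_iff (hF : (polyInY F).Monic) {x : 𝕜} :
    (fiberNorm F H).eval x = 0 ↔ ∃ z ∈ curve F, z 0 = x ∧ eval z H = 0 := by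
  rw [eval_fiberNorm hF, Multiset.prod_eq_zero_iff, Multiset.mem_map]
  constructor
  · rintro ⟨y, hy, h⟩
    exact ⟨![x, y], (mem_roots_fiberPoly hF).1 hy, rfl, h⟩
  · rintro ⟨z, hz, rfl, h⟩
    exact ⟨z 1, (mem_roots_fiberPoly hF).2 ((pair_eta z).symm ▸ hz), by rw [pair_eta, h]⟩

lemma norm_eval_fiberNorm_le (hF : (polyInY F).Monic) {C : ℝ}
    (h : ∀ z ∈ curve F, ‖eval z A‖ ≤ C * ‖eval z B‖) (x : 𝕜) :
    ‖(fiberNorm F A).eval x‖ ≤ C ^ (polyInY F).natDegree * ‖(fiberNorm F B).eval x‖ := by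
  have hcard : (fiberPoly F x).roots.card = (polyInY F).natDegree := by
    rw [← (IsAlgClosed.splits (fiberPoly F x)).natDegree_eq_card_roots, fiberPoly,
      hF.natDegree_map]
  rw [eval_fiberNorm hF, eval_fiberNorm hF, ← hcard]
  exact norm_prod_map_le _ fun y hy => h _ ((mem_roots_fiberPoly hF).1 hy)

-- The norms of `A` and `B` are proportional, and the norm of `A` has a zero where that of `B`
-- has none.
lemma exists_fiber_eval_eq_zero (hF : (polyInY F).Monic) {C : ℝ}
    (hle : ∀ z ∈ curve F, ‖eval z A‖ ≤ C * ‖eval z B‖) {z : Fin 2 → 𝕜} (hz : z ∈ curve F)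
    (hA : eval z A = 0) (hB : ∀ w ∈ curve F, w 0 = z 0 → eval w B ≠ 0) (x : 𝕜) :
    ∃ w ∈ curve F, w 0 = x ∧ eval w A = 0 := by
  obtain ⟨c, hc⟩ := exists_eq_C_mul_of_norm_eval_le (norm_eval_fiberNorm_le hF hle)
  have hnormA : (fiberNorm F A).eval (z 0) = 0 := (eval_fiberNorm_eq_zero_iff hF).2 ⟨z, hz, rfl, hA⟩
  have hnormB : (fiberNorm F B).eval (z 0) ≠ 0 := fun h =>
    let ⟨w, hw, hwz, hwB⟩ := (eval_fiberNorm_eq_zero_iff hF).1 h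
    hB w hw hwz hwB
  have hc0 : c = 0 := by simpa [hc, hnormB] using hnormA
  exact (eval_fiberNorm_eq_zero_iff hF).1 (by simp [hc, hc0])

-- If `A / B` took the value `t ≠ 0` above a large `x`, then `tB - A` would vanish somewhere in
-- every fibre, which is impossible above those `x` where `A` is small compared to `B`.
lemma eventually_eval_eq_zero_of_isBigO_of_isLittleO (hF : (polyInY F).Monic)
    (hbig : (fun z => eval z A) =O[𝓟 (curve F)] fun z => eval z B)
    (hlittle : (fun z => eval z A) =o[largeAbscissa F] fun z => eval z B)
    (hB : ∀ᶠ z in largeAbscissa F, eval z B ≠ 0) : ∀ᶠ z in largeAbscissa F, eval z A = 0 := by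
  obtain ⟨C, hC⟩ := isBigO_principal.1 hbig
  have hB' := eventually_largeAbscissa.1 hB
  refine eventually_largeAbscissa.2 (hB'.mono fun x hx z hz hzx => ?_)
  by_contra hAz
  set t := eval z A / eval z B
  have ht : t ≠ 0 := div_ne_zero hAz (hx z hz hzx)
  have hle : ∀ w ∈ curve F,
      ‖eval w (MvPolynomial.C t * B - A)‖ ≤ (‖t‖ + C) * ‖eval w B‖ := fun w hw => by
    rw [eval_sub, eval_mul, eval_C, add_mul, ← norm_mul]
    exact (norm_sub_le _ _).trans (by gcongr; exact hC w hw)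
  have hzero : eval z (MvPolynomial.C t * B - A) = 0 := by
    rw [eval_sub, eval_mul, eval_C, div_mul_cancel₀ _ (hx z hz hzx), sub_self]
  have hsmall := eventually_largeAbscissa.1 (hlittle.def (half_pos (norm_pos_iff.2 ht)))
  obtain ⟨x', hx'B, hx'A⟩ := (hB'.and hsmall).exists
  obtain ⟨w, hw, hwx, hwA⟩ :=
    exists_fiber_eval_eq_zero hF hle hz hzero (fun w hw hwz => hx w hw (hwz.trans hzx)) x'
  rw [eval_sub, eval_mul, eval_C, sub_eq_zero] at hwA
  have hAw := hx'A w hw hwx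
  rw [← hwA, norm_mul] at hAw
  have := mul_pos (norm_pos_iff.2 ht) (norm_pos_iff.2 (hx'B w hw hwx))
  linarith

lemma fiberPoly_eq_zero (hF : (polyInY F).Monic) {x : 𝕜}
    (h : ∀ z ∈ curve F, z 0 = x → eval z (pderiv 1 F) ≠ 0)
    (hH : ∀ z ∈ curve F, z 0 = x → eval z H = 0)
    (hdeg : (polyInY H).degree < (polyInY F).natDegree) : fiberPoly H x = 0 := by
  by_contra hne
  have hsub : (fiberPoly F x).roots ⊆ (fiberPoly H x).roots := fun y hy => by
    rw [Polynomial.mem_roots hne, Polynomial.IsRoot, eval_fiberPoly]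
    exact hH _ ((mem_roots_fiberPoly hF).1 hy) rfl
  have hcard := Multiset.card_le_card
    ((Multiset.le_iff_subset (nodup_roots_fiberPoly hF h)).2 hsub)
  rw [← (IsAlgClosed.splits (fiberPoly F x)).natDegree_eq_card_roots, fiberPoly,
    hF.natDegree_map] at hcard
  have hlt : (fiberPoly H x).degree < (polyInY F).natDegree :=
    Polynomial.degree_map_le.trans_lt hdeg
  rw [Polynomial.degree_eq_natDegree hne, Nat.cast_lt] at hlt
  exact (hcard.trans (Polynomial.card_roots' _)).not_gt hlt

lemma eq_zero_of_eventually_eval_eq_zero (hF : (polyInY F).Monic)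
    (h : ∀ᶠ z in largeAbscissa F, eval z (pderiv 1 F) ≠ 0)
    (hH : ∀ᶠ z in largeAbscissa F, eval z H = 0)
    (hdeg : (polyInY H).degree < (polyInY F).natDegree) : H = 0 := by
  have hfib : ∀ᶠ x in cobounded 𝕜, fiberPoly H x = 0 := by
    filter_upwards [eventually_largeAbscissa.1 h, eventually_largeAbscissa.1 hH] with x hx hxH
    exact fiberPoly_eq_zero hF hx hxH hdeg
  refine eq_zero_of_infinite_fiberPoly_eq_zero fun hfin => ?_
  have hcompl : ∀ᶠ x in cobounded 𝕜, fiberPoly H x ≠ 0 := hfin.isBounded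
  obtain ⟨x, hx, hx'⟩ := (hfib.and hcompl).exists
  exact hx' hx

end Fibers

section SingularPoints

variable {K : Type*} [CommRing K] {F : MvPolynomial (Fin 2) K}

/-- The common zeros of `F_X` and `F_Y`, on the curve `F = 0` or not. -/
def criticalPoints (F : MvPolynomial (Fin 2) K) : Set (Fin 2 → K) :=
  {z | ∀ i, eval z (pderiv i F) = 0}

/-- The singular points of the curve `F = 0`. -/
def singularPoints (F : MvPolynomial (Fin 2) K) : Set (Fin 2 → K) :=
  {z | eval z F = 0 ∧ z ∈ criticalPoints F}

/-- The curve `F = 0` is nodal: the Hessian determinant is nonzero at all its singular points. -/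
def IsNodal (F : MvPolynomial (Fin 2) K) : Prop :=
  ∀ z ∈ singularPoints F, eval z (jacobian (pderiv 0 F) (pderiv 1 F)) ≠ 0

end SingularPoints

section TangentFields

open Filter Asymptotics Topology
open Bornology (cobounded)

variable {p q : ℕ} {F G : MvPolynomial (Fin 2) ℂ} {A : Fin 2 → MvPolynomial (Fin 2) ℂ}

lemma eval_eq_zero_of_mul_eq_sum_pderiv {K : Type*} [Field K] {F G : MvPolynomial (Fin 2) K}
    {A : Fin 2 → MvPolynomial (Fin 2) K} (h : G * F = ∑ i, A i * pderiv i F) {z : Fin 2 → K}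
    (hz : z ∈ singularPoints F) (hdet : eval z (jacobian (pderiv 0 F) (pderiv 1 F)) ≠ 0)
    (i : Fin 2) : eval z (A i) = 0 := by
  obtain ⟨hzF, hcrit⟩ := hz
  have hX := hcrit 0
  have hY := hcrit 1
  have h0 := congrArg (fun H => eval z (pderiv 0 H)) h
  have h1 := congrArg (fun H => eval z (pderiv 1 H)) h
  simp only [Fin.sum_univ_two, pderiv_mul, map_add, map_mul, hzF, hX, hY, mul_zero, zero_add,
    add_zero] at h0 h1
  refine mul_left_cancel₀ hdet ?_
  simp only [jacobian, map_sub, map_mul]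
  match i with
  | 0 => linear_combination eval z (pderiv 0 (pderiv 1 F)) * h1 -
      eval z (pderiv 1 (pderiv 1 F)) * h0
  | 1 => linear_combination eval z (pderiv 1 (pderiv 0 F)) * h0 -
      eval z (pderiv 0 (pderiv 0 F)) * h1

-- Dedekind's independence of characters.
lemma linearIndependent_eval {σ K ι : Type*} [Field K] {P : ι → σ → K}
    (hP : Function.Injective P) :
    LinearIndependent K fun i (H : MvPolynomial σ K) => eval (P i) H :=
  (linearIndependent_monoidHom (MvPolynomial σ K) K).comp
    (fun i => (eval (P i) : MvPolynomial σ K →* K)) fun i j hij =>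
      hP (funext fun k => by simpa using DFunLike.congr_fun hij (X k))

namespace IsWeierstrass

lemma isBigO_curve_of_mul_eq_sum_pderiv (hF : IsWeierstrass p q F) (hp : 1 < p) (hq : 1 < q)
    (hnodal : IsNodal F) (hA : A 0 ∈ weightLT ℂ ![p, q] ((p - 1) * q))
    (h : G * F = ∑ i, A i * pderiv i F) :
    (fun z => eval z (A 0)) =O[𝓟 (curve F)] fun z => eval z (pderiv 1 F) := by
  refine isBigO_principal_of_nhdsWithin_of_cocompact
    (isClosed_eq (MvPolynomial.continuous_eval F) continuous_const) (fun z hzF => ?_) ?_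
  · refine isBigO_nhdsWithin_curve (B := A 1) (f := pderiv 0 F) (fun w hw => ?_) fun hX hY => ?_
    · simpa [Fin.sum_univ_two, show eval w F = 0 from hw] using (congrArg (eval w) h).symm
    · have hz : z ∈ singularPoints F := ⟨hzF, Fin.forall_fin_two.2 ⟨hX, hY⟩⟩
      exact ⟨eval_eq_zero_of_mul_eq_sum_pderiv h hz (hnodal z hz) 0,
        eval_eq_zero_of_mul_eq_sum_pderiv h hz (hnodal z hz) 1, hnodal z hz⟩
  · rw [← Metric.cobounded_eq_cocompact]
    exact (hF.isLittleO_eval_pderiv_one hp hq hA).isBigO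

theorem eq_zero_of_mul_eq_sum_pderiv (hF : IsWeierstrass p q F) (hp : 1 < p) (hq : 1 < q)
    (hnodal : IsNodal F) (hA0 : A 0 ∈ weightLT ℂ ![p, q] ((p - 1) * q))
    (hA1 : A 1 ∈ weightLT ℂ ![p, q] (p * q)) (h : G * F = ∑ i, A i * pderiv i F) : A = 0 := by
  have hmonic := hF.monic_polyInY (by omega)
  have hY : ∀ᶠ z in largeAbscissa F, eval z (pderiv 1 F) ≠ 0 :=
    largeAbscissa_le (hF.eventually_eval_pderiv_one_ne_zero hp hq)
  have hvanish0 : ∀ᶠ z in largeAbscissa F, eval z (A 0) = 0 :=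
    eventually_eval_eq_zero_of_isBigO_of_isLittleO hmonic
      (hF.isBigO_curve_of_mul_eq_sum_pderiv hp hq hnodal hA0 h)
      ((hF.isLittleO_eval_pderiv_one hp hq hA0).mono largeAbscissa_le) hY
  have hvanish1 : ∀ᶠ z in largeAbscissa F, eval z (A 1) = 0 := by
    filter_upwards [hvanish0, hY, mem_inf_of_right (mem_principal_self (curve F))] with z h0 hz hzF
    simpa [Fin.sum_univ_two, show eval z F = 0 from hzF, h0, hz] using congrArg (eval z) h
  have hzero {H : MvPolynomial (Fin 2) ℂ} (hH : H ∈ weightLT ℂ ![p, q] (p * q))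
      (hvanish : ∀ᶠ z in largeAbscissa F, eval z H = 0) : H = 0 :=
    eq_zero_of_eventually_eval_eq_zero hmonic hY hvanish
      (hF.natDegree_polyInY (by omega) ▸ degree_polyInY_lt hH)
  exact funext (Fin.forall_fin_two.2 ⟨hzero (weightLT_mono (by gcongr; omega) hA0) hvanish0,
    hzero hA1 hvanish1⟩)

-- A nonzero functional of this kind would be `λ (G · _)` for the socle functional `λ` of the
-- partial derivatives, and annihilating `F` would make `G F` a combination of them.
theorem functional_eq_zero (hF : IsWeierstrass p q F) (hp : 1 < p) (hq : 1 < q)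
    (hnodal : IsNodal F) {φ : MvPolynomial (Fin 2) ℂ →ₗ[ℂ] ℂ} (hφF : ∀ A, φ (A * F) = 0)
    (hφpderiv : ∀ i A, φ (A * pderiv i F) = 0)
    (hφlow : ∀ A ∈ weightLT ℂ ![p, q] (p * q), φ A = 0) : φ = 0 := by
  by_contra hφ
  have hlead := hF.hasLeadingMonomial_pderiv hp hq
  obtain ⟨lam, hlam⟩ := exists_isSocleFunctional (pair_ne_zero (by omega) (by omega)) hlead
  obtain ⟨G, hG, A, hA, hGF⟩ :=
    hlam.exists_mul_eq_sum hlead hF.mem_weightLT hφ hφpderiv hφF hφlow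
  rw [Fin.forall_fin_two, purePowers_milnorSocle_zero hq, purePowers_milnorSocle_one hp] at hA
  obtain ⟨n, rfl⟩ : ∃ n, p = n + 2 := ⟨p - 2, by omega⟩
  obtain ⟨m, rfl⟩ : ∃ m, q = m + 2 := ⟨q - 2, by omega⟩
  simp only [milnorSocle, weight_pair, Finsupp.coe_add, Pi.add_apply, Finsupp.single_eq_same, ne_eq,
    zero_ne_one, one_ne_zero, not_false_eq_true, Finsupp.single_eq_of_ne, Nat.add_sub_cancel,
    Nat.add_one_sub_one, add_zero, zero_add, zero_mul] at hA
  have hA0 : A 0 ∈ weightLT ℂ ![n + 2, m + 2] ((n + 1) * (m + 2)) :=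
    weightLT_mono (by ring_nf; omega) hA.1
  have hA1 : A 1 ∈ weightLT ℂ ![n + 2, m + 2] ((n + 2) * (m + 2)) :=
    weightLT_mono (by ring_nf; omega) hA.2
  have hF0 : F ≠ 0 := by
    rintro rfl
    exact (hF.monic_polyInY (by omega)).ne_zero (map_zero _)
  rw [hF.eq_zero_of_mul_eq_sum_pderiv hp hq hnodal hA0 hA1 hGF] at hGF
  simp [hG, hF0] at hGF

lemma exists_eval_eq (hF : IsWeierstrass p q F) (hp : 1 < p) (hq : 1 < q) (hnodal : IsNodal F)
    {ι : Type*} [Finite ι] {P : ι → Fin 2 → ℂ} (hP : Function.Injective P)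
    (hPF : ∀ i, P i ∈ singularPoints F) (v : ι → ℂ) :
    ∃ H ∈ weightLT ℂ ![p, q] (p * q), ∀ i, eval (P i) H = v i := by
  classical
  cases nonempty_fintype ι
  let ev : MvPolynomial (Fin 2) ℂ →ₗ[ℂ] ι → ℂ := LinearMap.pi fun i => (aeval (P i)).toLinearMap
  have hev : ∀ H i, ev H i = eval (P i) H := fun H i => by simp [ev, aeval_eq_eval]
  suffices htop : (weightLT ℂ ![p, q] (p * q)).map ev = ⊤ by
    obtain ⟨H, hH, hHv⟩ := (htop ▸ Submodule.mem_top : v ∈ (weightLT ℂ ![p, q] (p * q)).map ev)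
    exact ⟨H, hH, fun i => by rw [← hev, hHv]⟩
  by_contra hne
  obtain ⟨ψ, hψ, hker⟩ := Submodule.exists_le_ker_of_lt_top _ (lt_top_iff_ne_top.2 hne)
  have hkill (H : MvPolynomial (Fin 2) ℂ) (hH : ∀ i, eval (P i) H = 0) (A) :
      (ψ ∘ₗ ev) (A * H) = 0 := by
    rw [LinearMap.comp_apply, show ev (A * H) = 0 from funext fun i => by simp [hev, hH i],
      map_zero]
  have hzero : ψ ∘ₗ ev = 0 := hF.functional_eq_zero hp hq hnodal (hkill F fun i => (hPF i).1)
    (fun j => hkill _ fun i => (hPF i).2 j) fun A hA => hker (Submodule.mem_map_of_mem hA)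
  have hsum (w : ι → ℂ) : ψ w = ∑ i, ψ (Pi.single i 1) * w i := by
    conv_lhs => rw [pi_eq_sum_univ' w, map_sum]
    exact Finset.sum_congr rfl fun i _ => by rw [map_smul, smul_eq_mul, mul_comm]
  have hcomb : ∑ i, ψ (Pi.single i 1) • (fun H : MvPolynomial (Fin 2) ℂ => eval (P i) H) = 0 := by
    ext H
    have h := LinearMap.congr_fun hzero H
    rw [LinearMap.comp_apply, hsum] at h
    simpa [hev] using h
  have hcoord := Fintype.linearIndependent_iff.1 (linearIndependent_eval (K := ℂ) hP) _ hcomb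
  exact hψ (LinearMap.ext fun w => by
    rw [hsum]
    simp only [hcoord, zero_mul, Finset.sum_const_zero, LinearMap.zero_apply])

end IsWeierstrass

end TangentFields

section AffineFamilies

open Bornology (cobounded)
open Filter Asymptotics Topology
open Finsupp (weight)

lemma eval_affineMap_eq_add_sum_coord {σ K E ι : Type*} [CommRing K] [AddCommGroup E] [Module K E]
    [Fintype ι] (F : E →ᵃ[K] MvPolynomial σ K) (e : Module.Basis ι K E) (a b : E) (z : σ → K) :
    eval z (F b) = eval z (F a) + ∑ i, e.coord i (b - a) * eval z (F.linear (e i)) := by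
  conv_lhs => rw [← vsub_vadd b a, F.map_vadd, ← e.sum_repr (b -ᵥ a), map_sum]
  simp [add_comm]

variable {σ 𝕜 E : Type*} [NontriviallyNormedField 𝕜] [CompleteSpace 𝕜]
  [NormedAddCommGroup E] [NormedSpace 𝕜 E] [FiniteDimensional 𝕜 E]

/-- The differential at `(b, z)` of `(b, z) ↦ F_b(z)`, for a family of polynomials `F_b` depending
affinely on the parameter `b`. -/
noncomputable def familyDeriv [Fintype σ] (F : E →ᵃ[𝕜] MvPolynomial σ 𝕜) (b : E) (z : σ → 𝕜) :
    E × (σ → 𝕜) →L[𝕜] 𝕜 :=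
  (((aeval z).toLinearMap ∘ₗ F.linear).toContinuousLinearMap).coprod (evalDeriv (F b) z)

@[simp]
lemma familyDeriv_apply [Fintype σ] (F : E →ᵃ[𝕜] MvPolynomial σ 𝕜) (b : E) (z : σ → 𝕜)
    (v : E × (σ → 𝕜)) :
    familyDeriv F b z v = eval z (F.linear v.1) + evalDeriv (F b) z v.2 := by
  simp [familyDeriv, aeval_eq_eval]

lemma hasStrictFDerivAt_eval_family [Fintype σ] (F : E →ᵃ[𝕜] MvPolynomial σ 𝕜) (x : E × (σ → 𝕜)) :
    HasStrictFDerivAt (fun y : E × (σ → 𝕜) => eval y.2 (F y.1)) (familyDeriv F x.1 x.2) x := by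
  let e := Module.finBasis 𝕜 E
  have heval (G : MvPolynomial σ 𝕜) := (hasStrictFDerivAt_eval G x.2).comp x hasStrictFDerivAt_snd
  have hcoord (i) : HasStrictFDerivAt (fun y : E × (σ → 𝕜) => e.coord i (y.1 - x.1))
      ((e.coord i).toContinuousLinearMap ∘L .fst 𝕜 _ _) x :=
    (e.coord i).toContinuousLinearMap.hasStrictFDerivAt.comp x
      (hasStrictFDerivAt_fst.sub_const x.1)
  have h := (heval (F x.1)).fun_add (.fun_sum (u := Finset.univ) fun i _ =>
    (hcoord i).fun_mul (heval (F.linear (e i))))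
  simp only [← eval_affineMap_eq_add_sum_coord F e] at h
  refine h.congr_fderiv (ContinuousLinearMap.ext fun v => ?_)
  have hlin : F.linear v.1 = ∑ i, e.coord i v.1 • F.linear (e i) := by
    conv_lhs => rw [← e.sum_repr v.1, map_sum]
    simp only [map_smul, Module.Basis.coord_apply]
  simp [hlin, mul_comm, add_comm]

lemma continuous_eval_family [Finite σ] (F : E →ᵃ[𝕜] MvPolynomial σ 𝕜) :
    Continuous fun x : E × (σ → 𝕜) => eval x.2 (F x.1) :=
  have := Fintype.ofFinite σ
  continuous_iff_continuousAt.2 fun x => (hasStrictFDerivAt_eval_family F x).continuousAt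

lemma isLittleO_eval_family_weightedGauge_pow [Fintype σ] {w : σ → ℕ} (hw : ∀ i, w i ≠ 0) {k : ℕ}
    {H : E →ᵃ[𝕜] MvPolynomial σ 𝕜} (hH : ∀ b, H b ∈ weightLT 𝕜 w k) (a : E) :
    (fun x : E × (σ → 𝕜) => eval x.2 (H x.1)) =o[𝓝 a ×ˢ cobounded (σ → 𝕜)]
      fun x => weightedGauge w x.2 ^ k := by
  let e := Module.finBasis 𝕜 E
  have heval {G : MvPolynomial σ 𝕜} (hG : G ∈ weightLT 𝕜 w k) :=
    (isLittleO_eval_weightedGauge_pow hw hG).comp_tendsto (tendsto_snd (f := 𝓝 a))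
  have hlin (i) : H.linear (e i) ∈ weightLT 𝕜 w k := by
    rw [H.decomp']
    exact sub_mem (hH (e i)) (hH 0)
  have hcoord (i) : (fun x : E × (σ → 𝕜) => e.coord i (x.1 - a)) =O[𝓝 a ×ˢ cobounded (σ → 𝕜)]
      fun _ => (1 : ℝ) :=
    (((e.coord i).toContinuousLinearMap.continuous.comp (continuous_sub_right a)).tendsto a
      |>.comp tendsto_fst).isBigO_one ℝ
  refine .congr_left ?_ fun x => (eval_affineMap_eq_add_sum_coord H e a x.1 x.2).symm
  refine (heval (hH a)).add (.fun_sum fun i _ => ?_)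
  simpa [Function.comp_def] using (hcoord i).mul_isLittleO (heval (hlin i))

theorem eventually_exists_eval_family_ne_zero [Finite σ] [Nonempty σ] {w : σ → ℕ}
    (hw : ∀ i, w i ≠ 0) {n : σ → ℕ} {F : σ → E →ᵃ[𝕜] MvPolynomial σ 𝕜} {a : E}
    (hlead : ∀ i, HasLeadingMonomial w (F i a) (Finsupp.single i (n i)))
    (hlow : ∀ i b, F i b - F i a ∈ weightLT 𝕜 w (n i * w i)) :
    ∀ᶠ x in 𝓝 a ×ˢ cobounded (σ → 𝕜), ∃ i, eval x.2 (F i x.1) ≠ 0 := by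
  have := Fintype.ofFinite σ
  choose c hc hlead using hlead
  simp only [Finsupp.weight_single, smul_eq_mul] at hlead
  let H (i : σ) : E →ᵃ[𝕜] MvPolynomial σ 𝕜 :=
    F i - AffineMap.const 𝕜 E (monomial (Finsupp.single i (n i)) (c i))
  have hH (i : σ) (b : E) : H i b ∈ weightLT 𝕜 w (n i * w i) := by
    simpa [H] using add_mem (hlow i b) (hlead i)
  let l := (𝓝 a ×ˢ cobounded (σ → 𝕜)) ⊓ 𝓟 {x | ∀ i, eval x.2 (F i x.1) = 0}
  have hl : l = ⊥ := by
    refine eq_bot_of_isLittleO_weightedGauge_pow hw (tendsto_snd.mono_left inf_le_left)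
      (n := n) fun i => ?_
    rw [mul_comm (w i)]
    refine (((isLittleO_eval_family_weightedGauge_pow hw (hH i) a).mono
      inf_le_left).const_mul_left (-(c i)⁻¹)).congr' ?_ .rfl
    filter_upwards [mem_inf_of_right (mem_principal_self _)] with x hx
    have hxi : eval x.2 (F i x.1) = 0 := hx i
    simp [H, hxi, eval_monomial, Finsupp.prod_single_index, hc i]
  exact (eventually_inf_principal.1 (eventually_false_iff_eq_bot.2 hl)).mono fun x hx =>
    not_forall.1 hx

end AffineFamilies

section CurveFamilies

open Bornology (cobounded)
open Filter Topology
open Finsupp (weight)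

lemma eventually_forall_of_nhds_of_cocompact {X Y : Type*} [TopologicalSpace X] [TopologicalSpace Y]
    {a : X} {r : X × Y → Prop} (hloc : ∀ y, ∀ᶠ x in 𝓝 (a, y), r x)
    (hinf : ∀ᶠ x in 𝓝 a ×ˢ cocompact Y, r x) : ∀ᶠ b in 𝓝 a, ∀ y, r (b, y) := by
  obtain ⟨u, hu, v, hv, huv⟩ := mem_prod_iff.1 hinf
  obtain ⟨K, hK, hKv⟩ := mem_cocompact.1 hv
  have hcompact := hK.eventually_forall_of_forall_eventually (x₀ := a)
    (P := fun b y => r (b, y)) fun y _ => hloc y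
  filter_upwards [hu, hcompact] with b hb hbK y
  by_cases hy : y ∈ K
  · exact hbK y hy
  · exact huv ⟨hb, hKv hy⟩

lemma exists_mem_nhds_eventually_forall {X Y : Type*} [TopologicalSpace X] [TopologicalSpace Y]
    {a : X} {z : Y} {r : (X × Y) × (X × Y) → Prop} (h : ∀ᶠ u in 𝓝 ((a, z), (a, z)), r u) :
    ∃ V ∈ 𝓝 z, ∀ᶠ b in 𝓝 a, ∀ y ∈ V, ∀ y' ∈ V, r ((b, y), (b, y')) := by
  rw [nhds_prod_eq] at h
  obtain ⟨t, ht, hr⟩ := eventually_prod_self_iff'.1 h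
  rw [nhds_prod_eq] at ht
  obtain ⟨U, hU, V, hV, hUV⟩ := mem_prod_iff.1 ht
  exact ⟨V, hV, mem_of_superset hU fun b hb y hy y' hy' =>
    hr _ (hUV ⟨hb, hy⟩) _ (hUV ⟨hb, hy'⟩)⟩

/-- The family of the partial derivatives `∂F_b / ∂X_i` of an affine family of polynomials. -/
noncomputable def pderivFamily {σ K E : Type*} [CommRing K] [AddCommGroup E] [Module K E]
    (F : E →ᵃ[K] MvPolynomial σ K) (i : σ) : E →ᵃ[K] MvPolynomial σ K :=
  (pderiv i).toLinearMap.toAffineMap.comp F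

@[simp]
lemma pderivFamily_apply {σ K E : Type*} [CommRing K] [AddCommGroup E] [Module K E]
    (F : E →ᵃ[K] MvPolynomial σ K) (i : σ) (b : E) : pderivFamily F i b = pderiv i (F b) := rfl

@[simp]
lemma pderivFamily_linear_apply {σ K E : Type*} [CommRing K] [AddCommGroup E] [Module K E]
    (F : E →ᵃ[K] MvPolynomial σ K) (i : σ) (b : E) :
    (pderivFamily F i).linear b = pderiv i (F.linear b) := rfl

variable {𝕜 E : Type*} [NontriviallyNormedField 𝕜] [NormedAddCommGroup E] [NormedSpace 𝕜 E]
  {F : E →ᵃ[𝕜] MvPolynomial (Fin 2) 𝕜} {a : E} {z : Fin 2 → 𝕜} {p q : ℕ}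

/-- The value and the two partial derivatives of the polynomial `F_b` at the point `z`,
for `x = (b, z)`. -/
noncomputable def jet (F : E →ᵃ[𝕜] MvPolynomial (Fin 2) 𝕜) (x : E × (Fin 2 → 𝕜)) : 𝕜 × 𝕜 × 𝕜 :=
  (eval x.2 (F x.1), eval x.2 (pderiv 0 (F x.1)), eval x.2 (pderiv 1 (F x.1)))

lemma jet_snd_eq_zero_iff : (jet F (a, z)).2 = 0 ↔ z ∈ criticalPoints (F a) := by
  simp [jet, criticalPoints, Fin.forall_fin_two]

lemma jet_eq_zero_iff : jet F (a, z) = 0 ↔ z ∈ singularPoints (F a) := by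
  simp [jet, singularPoints, criticalPoints, Fin.forall_fin_two]

variable [CompleteSpace 𝕜] [FiniteDimensional 𝕜 E]

/-- The differential of `jet F` at `(b, z)`. -/
noncomputable def jetDeriv (F : E →ᵃ[𝕜] MvPolynomial (Fin 2) 𝕜) (b : E) (z : Fin 2 → 𝕜) :
    E × (Fin 2 → 𝕜) →L[𝕜] 𝕜 × 𝕜 × 𝕜 :=
  (familyDeriv F b z).prod
    ((familyDeriv (pderivFamily F 0) b z).prod (familyDeriv (pderivFamily F 1) b z))

lemma hasStrictFDerivAt_jet (F : E →ᵃ[𝕜] MvPolynomial (Fin 2) 𝕜) (x : E × (Fin 2 → 𝕜)) :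
    HasStrictFDerivAt (jet F) (jetDeriv F x.1 x.2) x := by
  have hpderiv (i : Fin 2) :
      HasStrictFDerivAt (fun y : E × (Fin 2 → 𝕜) => eval y.2 (pderiv i (F y.1)))
        (familyDeriv (pderivFamily F i) x.1 x.2) x :=
    hasStrictFDerivAt_eval_family (pderivFamily F i) x
  exact (hasStrictFDerivAt_eval_family F x).prodMk ((hpderiv 0).prodMk (hpderiv 1))

lemma continuous_jet (F : E →ᵃ[𝕜] MvPolynomial (Fin 2) 𝕜) : Continuous (jet F) := by
  have hpderiv (i : Fin 2) : Continuous fun x : E × (Fin 2 → 𝕜) => eval x.2 (pderiv i (F x.1)) :=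
    continuous_eval_family (pderivFamily F i)
  exact (continuous_eval_family F).prodMk ((hpderiv 0).prodMk (hpderiv 1))

lemma eventually_eval_jacobian_ne_zero
    (hdet : eval z (jacobian (pderiv 0 (F a)) (pderiv 1 (F a))) ≠ 0) :
    ∀ᶠ x in 𝓝 (a, z), eval x.2 (jacobian (pderiv 0 (F x.1)) (pderiv 1 (F x.1))) ≠ 0 := by
  have hcont (i j : Fin 2) :
      Continuous fun x : E × (Fin 2 → 𝕜) => eval x.2 (pderiv i (pderiv j (F x.1))) :=
    continuous_eval_family (pderivFamily (pderivFamily F j) i)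
  have hjac : Continuous fun x : E × (Fin 2 → 𝕜) =>
      eval x.2 (jacobian (pderiv 0 (F x.1)) (pderiv 1 (F x.1))) := by
    simp only [jacobian, map_sub, map_mul]
    exact ((hcont _ _).mul (hcont _ _)).sub ((hcont _ _).mul (hcont _ _))
  exact hjac.continuousAt.eventually_ne hdet

lemma injective_fst_prod_snd_jetDeriv
    (hdet : eval z (jacobian (pderiv 0 (F a)) (pderiv 1 (F a))) ≠ 0) :
    Function.Injective ((ContinuousLinearMap.fst 𝕜 E (Fin 2 → 𝕜)).prod
      (.snd 𝕜 𝕜 (𝕜 × 𝕜) ∘L jetDeriv F a z)) := by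
  rw [injective_iff_map_eq_zero]
  rintro ⟨b, v⟩ hbv
  obtain rfl : b = 0 := congrArg Prod.fst hbv
  have hX : evalDeriv (pderiv 0 (F a)) z v = 0 := by
    simpa [jetDeriv, -evalDeriv_apply] using congrArg (fun y => y.2.1) hbv
  have hY : evalDeriv (pderiv 1 (F a)) z v = 0 := by
    simpa [jetDeriv, -evalDeriv_apply] using congrArg (fun y => y.2.2) hbv
  have hv : v = 0 := (injective_iff_map_eq_zero _).1 (evalDeriv_prod_bijective hdet).injective v
    (Prod.ext hX hY)
  rw [hv, Prod.mk_zero_zero]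

lemma eventually_subsingleton_criticalPoints_inter
    (hdet : eval z (jacobian (pderiv 0 (F a)) (pderiv 1 (F a))) ≠ 0) :
    ∃ V ∈ 𝓝 z, ∀ᶠ b in 𝓝 a, (criticalPoints (F b) ∩ V).Subsingleton := by
  have hderiv : HasStrictFDerivAt (fun x : E × (Fin 2 → 𝕜) => (x.1, (jet F x).2))
      ((ContinuousLinearMap.fst 𝕜 E (Fin 2 → 𝕜)).prod
        (.snd 𝕜 𝕜 (𝕜 × 𝕜) ∘L jetDeriv F a z)) (a, z) :=
    hasStrictFDerivAt_fst.prodMk (hasStrictFDerivAt_jet F (a, z)).snd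
  have hinj : ∀ᶠ u in 𝓝 ((a, z), (a, z)),
      (u.1.1, (jet F u.1).2) = (u.2.1, (jet F u.2).2) → u.1 = u.2 :=
    (isBigO_sub_of_injective_fderiv hderiv (injective_fst_prod_snd_jetDeriv hdet)).eq_zero_imp.mono
      fun u hu h => sub_eq_zero.1 (hu (sub_eq_zero.2 h))
  obtain ⟨V, hV, hinjV⟩ := exists_mem_nhds_eventually_forall hinj
  refine ⟨V, hV, hinjV.mono fun b hb z hz z' hz' => ?_⟩
  have hcrit : (jet F (b, z)).2 = (jet F (b, z')).2 :=
    (jet_snd_eq_zero_iff.2 hz.1).trans (jet_snd_eq_zero_iff.2 hz'.1).symm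
  exact congrArg Prod.snd (hb z hz.2 z' hz'.2 (Prod.ext rfl hcrit))

lemma eventually_notMem_criticalPoints [CharZero 𝕜] (hF : ∀ b, IsWeierstrass p q (F b))
    (hp : 1 < p) (hq : 1 < q) (a : E) :
    ∀ᶠ x in 𝓝 a ×ˢ cobounded (Fin 2 → 𝕜), x.2 ∉ criticalPoints (F x.1) := by
  have hlow (b : E) : F b - F a ∈ weightLT 𝕜 ![p, q] (p * q) := by
    simpa [IsWeierstrass] using sub_mem (hF b) (hF a)
  refine (eventually_exists_eval_family_ne_zero (pair_ne_zero (by omega) (by omega))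
    (F := pderivFamily F) (fun i => (hF a).hasLeadingMonomial_pderiv hp hq i)
    fun i b => ?_).mono fun x hx hcrit => hx.elim fun i hi => hi (hcrit i)
  have hweight : (milnorSocle p q i + 1) * ![p, q] i = p * q - ![p, q] i := by
    obtain ⟨m, rfl⟩ : ∃ m, p = m + 2 := ⟨p - 2, by omega⟩
    obtain ⟨n, rfl⟩ : ∃ n, q = n + 2 := ⟨q - 2, by omega⟩
    refine Nat.eq_sub_of_add_eq ?_
    fin_cases i <;> simp [milnorSocle] <;> ring
  simpa [hweight] using pderiv_mem_weightLT (hlow b) i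

lemma eventually_singularPoints_subset [CharZero 𝕜] [ProperSpace 𝕜]
    (hF : ∀ b, IsWeierstrass p q (F b)) (hp : 1 < p) (hq : 1 < q) {V : Set (Fin 2 → 𝕜)}
    (hV : V ∈ 𝓝ˢ (singularPoints (F a))) : ∀ᶠ b in 𝓝 a, singularPoints (F b) ⊆ V := by
  refine eventually_forall_of_nhds_of_cocompact
    (r := fun x : E × (Fin 2 → 𝕜) => x.2 ∈ singularPoints (F x.1) → x.2 ∈ V) (fun z => ?_) ?_
  · by_cases hz : z ∈ singularPoints (F a)
    · have hnear : ∀ᶠ x : E × (Fin 2 → 𝕜) in 𝓝 (a, z), x.2 ∈ V :=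
        continuousAt_snd.eventually (mem_nhdsSet_iff_forall.1 hV z hz)
      exact hnear.mono fun x hx _ => hx
    · have hjet : jet F (a, z) ≠ 0 := mt jet_eq_zero_iff.1 hz
      have hne : ∀ᶠ x in 𝓝 (a, z), jet F x ≠ 0 :=
        (continuous_jet F).continuousAt.eventually_ne hjet
      exact hne.mono fun x hx hxs => absurd (jet_eq_zero_iff.2 hxs) hx
  · rw [← Metric.cobounded_eq_cocompact]
    exact (eventually_notMem_criticalPoints hF hp hq a).mono fun x hx hxs => absurd hxs.2 hx

theorem eventually_singularPoints_eq_image [CharZero 𝕜] [ProperSpace 𝕜] {ι : Type*} [Finite ι]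
    (hF : ∀ b, IsWeierstrass p q (F b)) (hp : 1 < p) (hq : 1 < q)
    {P : ι → Fin 2 → 𝕜} (hP : singularPoints (F a) = Set.range P) (hnodal : IsNodal (F a)) :
    ∀ᶠ x in 𝓝 (a, P), (∀ i, x.2 i ∈ criticalPoints (F x.1)) →
      singularPoints (F x.1) = x.2 '' {i | eval (x.2 i) (F x.1) = 0} ∧ IsNodal (F x.1) := by
  have hdet (i) := hnodal (P i) (hP ▸ Set.mem_range_self i)
  choose V hV hunique using fun i => eventually_subsingleton_criticalPoints_inter (hdet i)
  have hVP : ⋃ i, V i ∈ 𝓝ˢ (singularPoints (F a)) := by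
    rw [hP, mem_nhdsSet_iff_forall, Set.forall_mem_range]
    exact fun i => mem_of_superset (hV i) (Set.subset_iUnion V i)
  have hfst : Tendsto Prod.fst (𝓝 (a, P)) (𝓝 a) := continuousAt_fst
  have hpoint (i) : Tendsto (fun x : E × (ι → Fin 2 → 𝕜) => (x.1, x.2 i)) (𝓝 (a, P))
      (𝓝 (a, P i)) :=
    (continuous_fst.prodMk ((continuous_apply i).comp continuous_snd)).continuousAt
  have hmem (i) : ∀ᶠ x in 𝓝 (a, P), x.2 i ∈ V i :=
    (continuous_snd.continuousAt.comp (hpoint i)).eventually_mem (hV i)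
  filter_upwards [eventually_all.2 fun i => (hpoint i).eventually
      (eventually_eval_jacobian_ne_zero (hdet i)), eventually_all.2 hmem,
    hfst.eventually (eventually_all.2 hunique),
    hfst.eventually (eventually_singularPoints_subset hF hp hq hVP)] with x hxdet hxV hxu hxs hcrit
  have heq : singularPoints (F x.1) = x.2 '' {i | eval (x.2 i) (F x.1) = 0} := by
    refine subset_antisymm (fun z hz => ?_) ?_
    · obtain ⟨i, hi⟩ := Set.mem_iUnion.1 (hxs hz)
      obtain rfl : x.2 i = z := hxu i ⟨hcrit i, hxV i⟩ ⟨hz.2, hi⟩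
      exact ⟨i, hz.1, rfl⟩
    · rintro _ ⟨i, hi, rfl⟩
      exact ⟨hi, hcrit i⟩
  refine ⟨heq, fun z hz => ?_⟩
  obtain ⟨i, -, rfl⟩ := heq ▸ hz
  exact hxdet i

end CurveFamilies

section Perturbation

open Filter Topology

variable {E ι : Type*} [NormedAddCommGroup E] [NormedSpace ℂ E] [FiniteDimensional ℂ E] [Finite ι]
  {F : E →ᵃ[ℂ] MvPolynomial (Fin 2) ℂ} {p q : ℕ} {a : E} {P : ι → Fin 2 → ℂ}

lemma exists_jetDeriv_eq (hF : IsWeierstrass p q (F a))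
    (hfull : weightLT ℂ ![p, q] (p * q) ≤ LinearMap.range F.linear) (hp : 1 < p) (hq : 1 < q)
    (hnodal : IsNodal (F a)) (hP : Function.Injective P)
    (hPF : ∀ i, P i ∈ singularPoints (F a)) (v : ι → ℂ × ℂ × ℂ) :
    ∃ (b : E) (u : ι → Fin 2 → ℂ), ∀ i, jetDeriv F a (P i) (b, u i) = v i := by
  obtain ⟨H, hH, hHv⟩ := hF.exists_eval_eq hp hq hnodal hP hPF fun i => (v i).1
  obtain ⟨b, rfl⟩ := hfull hH
  choose u hu using fun i => (evalDeriv_prod_bijective (hnodal (P i) (hPF i))).surjective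
    ((v i).2 - (eval (P i) (pderiv 0 (F.linear b)), eval (P i) (pderiv 1 (F.linear b))))
  have hcrit (i : ι) (j : Fin 2) : eval (P i) (pderiv j (F a)) = 0 := (hPF i).2 j
  refine ⟨b, u, fun i => Prod.ext ?_ ?_⟩
  · simp [jetDeriv, hcrit, hHv]
  · exact (eq_sub_iff_add_eq'.1 (hu i) :)

lemma map_nhds_jet (hF : IsWeierstrass p q (F a))
    (hfull : weightLT ℂ ![p, q] (p * q) ≤ LinearMap.range F.linear) (hp : 1 < p) (hq : 1 < q)
    (hnodal : IsNodal (F a)) (hP : Function.Injective P)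
    (hPF : ∀ i, P i ∈ singularPoints (F a)) :
    map (fun (x : E × (ι → Fin 2 → ℂ)) i => jet F (x.1, x.2 i)) (𝓝 (a, P)) = 𝓝 0 := by
  cases nonempty_fintype ι
  let point (i : ι) : E × (ι → Fin 2 → ℂ) →L[ℂ] E × (Fin 2 → ℂ) :=
    (ContinuousLinearMap.fst ℂ _ _).prod (.proj i ∘L .snd ℂ _ _)
  have hderiv : HasStrictFDerivAt (fun (x : E × (ι → Fin 2 → ℂ)) i => jet F (x.1, x.2 i))
      (.pi fun i => jetDeriv F a (P i) ∘L point i) (a, P) :=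
    hasStrictFDerivAt_pi.2 fun i =>
      (hasStrictFDerivAt_jet F (a, P i)).comp (a, P) (point i).hasStrictFDerivAt
  have hjet : (fun i => jet F (a, P i)) = 0 := funext fun i => jet_eq_zero_iff.2 (hPF i)
  rw [hderiv.map_nhds_eq_of_surj, hjet]
  refine LinearMap.range_eq_top.2 fun v => ?_
  obtain ⟨b, u, hbu⟩ := exists_jetDeriv_eq hF hfull hp hq hnodal hP hPF v
  exact ⟨(b, u), funext hbu⟩

-- Prescribe the jets: zero at the chosen points, a small nonzero value with vanishing gradient at
-- the others, which therefore remain critical points but leave the curve.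
theorem exists_isNodal_singularPoints_eq_image (hF : ∀ b, IsWeierstrass p q (F b))
    (hfull : weightLT ℂ ![p, q] (p * q) ≤ LinearMap.range F.linear) (hp : 1 < p) (hq : 1 < q)
    (hnodal : IsNodal (F a)) (hP : Function.Injective P)
    (hPF : singularPoints (F a) = Set.range P) (s : Set ι)
    {U : Set (E × (ι → Fin 2 → ℂ))} (hU : U ∈ 𝓝 (a, P)) :
    ∃ x ∈ U, singularPoints (F x.1) = x.2 '' s ∧ IsNodal (F x.1) := by
  classical
  let target (τ : ℂ) (i : ι) : ℂ × ℂ × ℂ := (if i ∈ s then 0 else τ, 0)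
  have htarget : Tendsto target (𝓝[≠] 0) (𝓝 0) := by
    refine tendsto_nhdsWithin_of_tendsto_nhds (Continuous.tendsto' ?_ 0 0 ?_)
    · exact continuous_pi fun i => (by split_ifs <;> fun_prop :
        Continuous fun τ : ℂ => if i ∈ s then 0 else τ).prodMk continuous_const
    · simp [target, funext_iff]
  have hgood := inter_mem hU (eventually_singularPoints_eq_image hF hp hq hPF hnodal)
  have himage := image_mem_map
    (m := fun (x : E × (ι → Fin 2 → ℂ)) i => jet F (x.1, x.2 i)) hgood
  rw [map_nhds_jet (hF a) hfull hp hq hnodal hP fun i => hPF ▸ Set.mem_range_self i] at himage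
  obtain ⟨τ, ⟨x, ⟨hxU, hx⟩, hxτ⟩, hτ : τ ≠ 0⟩ :=
    ((htarget.eventually_mem himage).and eventually_mem_nhdsWithin).exists
  have hcrit (i) : x.2 i ∈ criticalPoints (F x.1) :=
    jet_snd_eq_zero_iff.1 (congrArg Prod.snd (congrFun hxτ i))
  have hval (i) : eval (x.2 i) (F x.1) = if i ∈ s then 0 else τ :=
    congrArg Prod.fst (congrFun hxτ i)
  have hs : {i | eval (x.2 i) (F x.1) = 0} = s := Set.ext fun i => by simp [hval, hτ]
  exact ⟨x, hxU, hs ▸ hx hcrit⟩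

end Perturbation

section NormedWeierstrass

open Finsupp (weight)

variable {p q : ℕ}

/-- The polynomial `∑ a_{νμ} X ^ ν Y ^ μ`, over the pairs with `ν p + μ q < p q`, as a linear
function of its coefficients. -/
noncomputable def lowerTerms (K : Type*) [CommSemiring K] (p q : ℕ) :
    (idxSet p q → K) →ₗ[K] MvPolynomial (Fin 2) K :=
  Fintype.linearCombination K fun i =>
    monomial (Finsupp.single 0 (i : ℕ × ℕ).1 + Finsupp.single 1 (i : ℕ × ℕ).2) 1

lemma wPoly_eq_add_lowerTerms {K : Type} [CommRing K] (α : idxSet p q → K) :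
    wPoly K p q α = X 1 ^ p - X 0 ^ q + lowerTerms K p q α := by
  simp [wPoly, lowerTerms, Fintype.linearCombination_apply, smul_eq_C_mul, mul_assoc,
    X_pow_eq_monomial, monomial_mul]

lemma mem_idxSet_iff {ν μ : ℕ} : (ν, μ) ∈ idxSet p q ↔ ν * p + μ * q < p * q := by
  refine ⟨fun h => (Finset.mem_filter.1 h).2, fun h => ?_⟩
  have hν : ν < q := by nlinarith
  have hμ : μ < p := by nlinarith
  simp [idxSet, h, hν, hμ]

lemma range_lowerTerms {K : Type*} [Field K] :
    LinearMap.range (lowerTerms K p q) = weightLT K ![p, q] (p * q) := by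
  rw [lowerTerms, Fintype.range_linearCombination, weightLT, restrictSupport_eq_span]
  congr 1
  refine subset_antisymm ?_ ?_
  · rintro _ ⟨⟨⟨ν, μ⟩, h⟩, rfl⟩
    exact ⟨_, by simpa [weight_pair] using mem_idxSet_iff.1 h, rfl⟩
  · rintro _ ⟨d, hd : weight ![p, q] d < p * q, rfl⟩
    rw [weight_pair] at hd
    have hpair : Finsupp.single 0 (d 0) + Finsupp.single 1 (d 1) = d :=
      Finsupp.ext (Fin.forall_fin_two.2 ⟨by simp, by simp⟩)
    exact ⟨⟨(d 0, d 1), mem_idxSet_iff.2 hd⟩, congrArg (monomial · 1) hpair⟩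

lemma isWeierstrass_wPoly {K : Type} [Field K] (α : idxSet p q → K) :
    IsWeierstrass p q (wPoly K p q α) := by
  rw [IsWeierstrass, wPoly_eq_add_lowerTerms, add_sub_cancel_left, ← range_lowerTerms]
  exact LinearMap.mem_range_self _ α

/-- The normed Weierstraß polynomials of type `p, q`, as an affine family over their Euclidean
space of coefficients. -/
noncomputable def wPolyFamily (p q : ℕ) :
    EuclideanSpace ℂ (idxSet p q) →ᵃ[ℂ] MvPolynomial (Fin 2) ℂ :=
  (lowerTerms ℂ p q ∘ₗ (WithLp.linearEquiv 2 ℂ _).toLinearMap).toAffineMap +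
    AffineMap.const ℂ _ (X 1 ^ p - X 0 ^ q)

lemma wPolyFamily_apply (α : EuclideanSpace ℂ (idxSet p q)) :
    wPolyFamily p q α = wPoly ℂ p q fun i => α i := by
  rw [wPoly_eq_add_lowerTerms, add_comm]
  rfl

lemma range_wPolyFamily_linear :
    LinearMap.range (wPolyFamily p q).linear = weightLT ℂ ![p, q] (p * q) := by
  simp [wPolyFamily, LinearMap.range_comp, range_lowerTerms]

end NormedWeierstrass

section PairCoordinates

variable {K : Type} [CommRing K] {G : MvPolynomial (Fin 2) K}

lemma isSingAt_iff {R : K × K} : IsSingAt K G R ↔ ![R.1, R.2] ∈ singularPoints G := by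
  simp [IsSingAt, singularPoints, criticalPoints, Fin.forall_fin_two]

lemma isNodeAt_iff {R : K × K} : IsNodeAt K G R ↔ ![R.1, R.2] ∈ singularPoints G ∧
    eval ![R.1, R.2] (jacobian (pderiv 0 G) (pderiv 1 G)) ≠ 0 := by
  rw [IsNodeAt, isSingAt_iff, hessPoly_eq_jacobian]

lemma forall_isSingAt_iff_exists {ι : Type*} {P : ι → Fin 2 → K} :
    (∀ R, IsSingAt K G R ↔ ∃ i, R = (P i 0, P i 1)) ↔ singularPoints G = Set.range P := by
  have hpair (R : K × K) (i) : R = (P i 0, P i 1) ↔ P i = ![R.1, R.2] := by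
    simp [Prod.ext_iff, funext_iff, Fin.forall_fin_two, eq_comm]
  rw [Set.ext_iff, (finTwoArrowEquiv K).symm.forall_congr_left]
  simp [isSingAt_iff, hpair, pair_eta]

lemma forall_isNodeAt_iff_isNodal {ι : Type*} {P : ι → Fin 2 → K}
    (hP : singularPoints G = Set.range P) :
    (∀ i, IsNodeAt K G (P i 0, P i 1)) ↔ IsNodal G := by
  simp [isNodeAt_iff, pair_eta, IsNodal, hP]

end PairCoordinates

section Simplification

open Filter Topology

lemma eventually_injective {ι X : Type*} [Finite ι] [TopologicalSpace X] [T2Space X]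
    {P : ι → X} (hP : Function.Injective P) : ∀ᶠ Q in 𝓝 P, Function.Injective Q := by
  refine eventually_all.2 fun i => eventually_all.2 fun j => ?_
  by_cases hij : i = j
  · exact .of_forall fun _ _ => hij
  · have hne : ∀ᶠ Q in 𝓝 P, Q i ≠ Q j :=
      ((continuousAt_apply i P).ne_iff_eventually_ne (continuousAt_apply j P)).1 (hP.ne hij)
    exact hne.mono fun Q hQ h => absurd h hQ

theorem simplification_of_nodal_curves_general {ι κ : Type*} [Finite ι] {p q : ℕ}
    (hp : 1 < p) (hq : 1 < q) (α : EuclideanSpace ℂ (idxSet p q))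
    (P : ι → EuclideanSpace ℂ (Fin 2)) (hPinj : Function.Injective P)
    (hsing : ∀ R : ℂ × ℂ,
      IsSingAt ℂ (wPoly ℂ p q fun i => α i) R ↔ ∃ i, R = (P i 0, P i 1))
    (hnode : ∀ i, IsNodeAt ℂ (wPoly ℂ p q fun i => α i) (P i 0, P i 1))
    (sel : κ → ι) (hsel : Function.Injective sel) (ε δ : ℝ) (hε : 0 < ε) (hδ : 0 < δ) :
    ∃ β : EuclideanSpace ℂ (idxSet p q), dist β α < ε ∧
      ∃ Q : κ → EuclideanSpace ℂ (Fin 2),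
        Function.Injective Q ∧
        (∀ R : ℂ × ℂ,
          IsSingAt ℂ (wPoly ℂ p q fun i => β i) R ↔ ∃ k, R = (Q k 0, Q k 1)) ∧
        (∀ k, IsNodeAt ℂ (wPoly ℂ p q fun i => β i) (Q k 0, Q k 1)) ∧
        (∀ k, dist (Q k) (P (sel k)) < δ) := by
  have hrange := forall_isSingAt_iff_exists.1 hsing
  have hnodal := (forall_isNodeAt_iff_isNodal hrange).1 hnode
  rw [← wPolyFamily_apply] at hrange hnodal
  have hclose (i) : ∀ᶠ Q : ι → Fin 2 → ℂ in 𝓝 fun i => (P i).ofLp,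
      dist (WithLp.toLp 2 (Q i)) (P i) < δ :=
    Tendsto.eventually_lt_const hδ (Continuous.tendsto' (by fun_prop) _ _ (dist_self _))
  have hU := prod_mem_nhds (Metric.ball_mem_nhds α hε) ((eventually_all.2 hclose).and
    (eventually_injective ((WithLp.ofLp_injective 2).comp hPinj)))
  obtain ⟨⟨β, Q⟩, ⟨hβ, hQδ, hQinj⟩, hQ, hβnodal⟩ := exists_isNodal_singularPoints_eq_image
    (fun b => wPolyFamily_apply b ▸ isWeierstrass_wPoly _) range_wPolyFamily_linear.ge hp hq
    hnodal ((WithLp.ofLp_injective 2).comp hPinj) hrange (Set.range sel) hU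
  rw [← Set.range_comp, wPolyFamily_apply] at hQ
  rw [wPolyFamily_apply] at hβnodal
  exact ⟨β, hβ, fun k => WithLp.toLp 2 (Q (sel k)),
    (WithLp.toLp_injective 2).comp (hQinj.comp hsel), forall_isSingAt_iff_exists.2 hQ,
    (forall_isNodeAt_iff_isNodal hQ).2 hβnodal, fun k => hQδ (sel k)⟩

end Simplification

/-- **Simplification of nodal curves (Proposition 3.3).** Let `C_α` be a nodal curve of type
`p,q` with exactly `l ≥ 1` nodes `P 0, …, P (l-1)`, and select `λ` pairwise distinct ones
`P (sel 0), …, P (sel (λ-1))`. Then for all `ε > 0` and `δ > 0` there is `β` with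
`‖β − α‖ < ε` such that `C_β` is a nodal curve with exactly `λ` nodes `Q 0, …, Q (λ-1)`
satisfying `‖Q k − P (sel k)‖ < δ` for all `k`. -/
theorem simplification_of_nodal_curves
    (p q : ℕ) (hp : 1 < p) (hpq : p < q) (hco : Nat.Coprime p q)
    (α : EuclideanSpace ℂ ↥(idxSet p q))
    (l : ℕ) (hl : 1 ≤ l) (P : Fin l → EuclideanSpace ℂ (Fin 2))
    (hPinj : Function.Injective P)
    (hsing : ∀ R : ℂ × ℂ,
      IsSingAt ℂ (wPoly ℂ p q fun i => α i) R ↔ ∃ i, R = (P i 0, P i 1))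
    (hnode : ∀ i, IsNodeAt ℂ (wPoly ℂ p q fun i => α i) (P i 0, P i 1))
    (lam : ℕ) (hlam1 : 1 ≤ lam) (hlaml : lam ≤ l)
    (sel : Fin lam → Fin l) (hsel : Function.Injective sel)
    (ε δ : ℝ) (hε : 0 < ε) (hδ : 0 < δ) :
    ∃ β : EuclideanSpace ℂ ↥(idxSet p q), dist β α < ε ∧
      ∃ Q : Fin lam → EuclideanSpace ℂ (Fin 2),
        Function.Injective Q ∧
        (∀ R : ℂ × ℂ,
          IsSingAt ℂ (wPoly ℂ p q fun i => β i) R ↔ ∃ k, R = (Q k 0, Q k 1)) ∧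
        (∀ k, IsNodeAt ℂ (wPoly ℂ p q fun i => β i) (Q k 0, Q k 1)) ∧
        (∀ k, dist (Q k) (P (sel k)) < δ) :=
  simplification_of_nodal_curves_general hp (hp.trans hpq) α P hPinj hsing hnode sel hsel ε δ hε hδ
end

section
/- The polynomial Δ ∈ R is irreducible. Consequently the set of α ∈ K^I for which the curve C_α is singular is an irreducible hypersurface in K^I, defined by the single irreducible equation Δ = 0. -/
open MvPolynomial

set_option synthInstance.maxHeartbeats 1000000
set_option maxHeartbeats 1000000

/-- `R = K[{A_νμ}]`, the polynomial ring in the indeterminates `A_νμ`, `(ν,μ) ∈ I`. -/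
abbrev coefRing (K : Type) [Field K] (p q : ℕ) := MvPolynomial ↥(idxSet p q) K

/-- `R[X,Y]`, with `X 0 = X` and `X 1 = Y`. -/
abbrev genRing (K : Type) [Field K] (p q : ℕ) := MvPolynomial (Fin 2) (coefRing K p q)

/-- The generic normed Weierstraß polynomial
`F = Y^p − X^q + Σ_{(ν,μ) ∈ I} A_νμ X^ν Y^μ ∈ R[X,Y]` of type `p,q`. -/
noncomputable def genF (K : Type) [Field K] (p q : ℕ) : genRing K p q :=
  X 1 ^ p - X 0 ^ q +
    ∑ i : idxSet p q, C (MvPolynomial.X i) * X 0 ^ (i : ℕ × ℕ).1 * X 1 ^ (i : ℕ × ℕ).2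

/-- The determinant `Δ ∈ R` of the `R`-linear endomorphism of `N = R[X,Y]/(F_X, F_Y)`
given by multiplication by the residue class of `F`. -/
noncomputable def genDelta (K : Type) [Field K] (p q : ℕ) : coefRing K p q :=
  LinearMap.det
    (LinearMap.mul (coefRing K p q)
      (genRing K p q ⧸ Ideal.span {pderiv 0 (genF K p q), pderiv 1 (genF K p q)})
      (Ideal.Quotient.mk (Ideal.span {pderiv 0 (genF K p q), pderiv 1 (genF K p q)})
        (genF K p q)))

/-!
`Δ` is the norm of `F` in the finite free algebra `N`, so the radical of `(Δ)` is the radical of the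
contraction to `R` of the ideal `(F, F_X, F_Y)` of `R[X, Y]`. That ideal is prime: subtracting from
`F` its tangent plane at the generic point `(X, Y)` changes the coefficients only by elements of the
ideal, and evaluating the result at `(X, Y)` realizes it as the kernel of a map into a domain.
Hence `Δ` is associated to a power of a prime `π`.

Along a line `F_a + t` the norm is a monic polynomial in `t` of degree `(p - 1)(q - 1)` whose roots
are the negatives of the critical values of `F_a`. For a suitable pencil
`Y ^ p - X ^ q + q X - e Y + t` these are pairwise distinct, so a proper power of `π` is excluded.
-/

open scoped MonomialOrder

section WeightOrder

variable {σ : Type*}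

/-- The map into a lexicographic product that compares exponents by their weight first. -/
noncomputable def weightKey (w : σ → ℕ) (m : MonomialOrder σ) : (σ →₀ ℕ) →+ ℕ ×ₗ m.syn where
  toFun d := toLex (Finsupp.weight w d, m.toSyn d)
  map_zero' := by simp only [map_zero]; rfl
  map_add' d e := by simp only [map_add]; rfl

theorem weightKey_leftInverse (w : σ → ℕ) (m : MonomialOrder σ) :
    Function.LeftInverse (fun k => m.toSyn.symm (ofLex k).2) (weightKey w m) :=
  fun d => m.toSyn.symm_apply_apply d

/-- The monomial order that compares the weights `∑ i, d i * w i` of exponents `d` first and breaks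
ties by the monomial order `m`. -/
noncomputable def weightOrder (w : σ → ℕ) (m : MonomialOrder σ) : MonomialOrder σ where
  syn := AddMonoidHom.mrange (weightKey w m)
  toSyn := AddEquiv.ofLeftInverse' (weightKey w m) (weightKey_leftInverse w m)
  toSyn_monotone d e h := by
    have hw : Finsupp.weight w d ≤ Finsupp.weight w e := by
      obtain ⟨c, rfl⟩ := le_iff_exists_add.1 h
      rw [map_add]
      exact le_self_add
    exact Prod.Lex.toLex_mono (Prod.mk_le_mk.2 ⟨hw, m.toSyn_monotone h⟩)

theorem weightOrder_lt_of_weight_lt {w : σ → ℕ} {m : MonomialOrder σ} {d e : σ →₀ ℕ}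
    (h : Finsupp.weight w d < Finsupp.weight w e) : d ≺[weightOrder w m] e :=
  Subtype.coe_lt_coe.1 (Prod.Lex.toLex_lt_toLex.2 (Or.inl h) :
    weightKey w m d < weightKey w m e)

theorem weightOrder_leading_of_coeff_eq {R : Type*} [CommRing R] {w : σ → ℕ} {m : MonomialOrder σ}
    {f : MvPolynomial σ R} {d : σ →₀ ℕ} {c : R} (hc : c ≠ 0)
    (hf : ∀ e, Finsupp.weight w d ≤ Finsupp.weight w e → coeff e f = coeff e (monomial d c)) :
    (weightOrder w m).degree f = d ∧ (weightOrder w m).leadingCoeff f = c := by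
  classical
  have hcoeff : coeff d f = c := by rw [hf d le_rfl, coeff_monomial, if_pos rfl]
  have hdeg : (weightOrder w m).degree f = d := by
    refine (weightOrder w m).toSyn.injective (le_antisymm ?_ ?_)
    · refine MonomialOrder.degree_le_iff.2 fun e he => ?_
      rcases lt_or_ge (Finsupp.weight w e) (Finsupp.weight w d) with hlt | hge
      · exact (weightOrder_lt_of_weight_lt hlt).le
      · rw [mem_support_iff, hf e hge, coeff_monomial] at he
        rw [show d = e by simpa using (ite_ne_right_iff.1 he).1]
    · exact MonomialOrder.le_degree (mem_support_iff.2 (by rwa [hcoeff]))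
  exact ⟨hdeg, by rw [MonomialOrder.leadingCoeff, hdeg, hcoeff]⟩

end WeightOrder

section DisjointLeadingTerms

variable {σ R ι : Type*} [CommRing R] (m : MonomialOrder σ) {f g r : MvPolynomial σ R}

/-- If the leading exponents of `f` and `g` are disjoint, then `m`-reduced elements of the ideal
`(f, g)` vanish: after dividing the cofactor of `f` by `g`, the leading terms of the two summands
cannot cancel. -/
theorem eq_zero_of_mem_span_pair_of_reduced
    (hf : IsUnit (m.leadingCoeff f)) (hg : IsUnit (m.leadingCoeff g))
    (hfg : m.degree f ⊓ m.degree g = 0) (hr : r ∈ Ideal.span {f, g})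
    (hred : ∀ d ∈ r.support, ¬ m.degree f ≤ d ∧ ¬ m.degree g ≤ d) : r = 0 := by
  by_contra hr0
  obtain ⟨s, t, hst⟩ := Ideal.mem_span_pair.1 hr
  obtain ⟨k, s', hs, -, hs'⟩ := m.div_single hg s
  obtain ⟨t', hst'⟩ : ∃ t', s' * f + t' * g = r := ⟨t + k * f, by rw [← hst, hs]; ring⟩
  obtain ⟨hrf, hrg⟩ := hred _ (m.degree_mem_support hr0)
  have hdf {h : MvPolynomial σ R} (hh : h ≠ 0) :
      m.degree (h * f) = m.degree h + m.degree f :=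
    m.degree_mul_of_isRegular_right hh hf.isRegular
  have hdg {h : MvPolynomial σ R} (hh : h ≠ 0) :
      m.degree (h * g) = m.degree h + m.degree g :=
    m.degree_mul_of_isRegular_right hh hg.isRegular
  have hs0 : s' ≠ 0 := by
    rintro rfl
    rw [zero_mul, zero_add] at hst'
    subst hst'
    exact hrg (by rw [hdg (left_ne_zero_of_mul hr0)]; exact le_add_self)
  have ht0 : t' ≠ 0 := by
    rintro rfl
    rw [zero_mul, add_zero] at hst'
    subst hst'
    exact hrf (by rw [hdf hs0]; exact le_add_self)
  have hne : m.degree (s' * f) ≠ m.degree (t' * g) := by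
    rw [hdf hs0, hdg ht0]
    refine fun h => hs' _ (m.degree_mem_support hs0) fun i => ?_
    have hi := DFunLike.congr_fun h i
    have hinf := DFunLike.congr_fun hfg i
    simp only [Finsupp.add_apply] at hi
    simp only [Finsupp.inf_apply, Finsupp.zero_apply] at hinf
    omega
  have hsup := m.degree_add_of_ne hne
  rw [hst'] at hsup
  rcases max_choice (m.toSyn (m.degree (s' * f))) (m.toSyn (m.degree (t' * g))) with h | h <;>
    rw [h, m.toSyn.injective.eq_iff] at hsup
  · exact hrf (by rw [hsup, hdf hs0]; exact le_add_self)
  · exact hrg (by rw [hsup, hdg ht0]; exact le_add_self)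

theorem mk_monomial_eq_smul (I : Ideal (MvPolynomial σ R)) (d : σ →₀ ℕ) (c : R) :
    Ideal.Quotient.mk I (monomial d c) = c • Ideal.Quotient.mk I (monomial d 1) := by
  rw [← Ideal.Quotient.mkₐ_eq_mk R, ← map_smul, smul_monomial, smul_eq_mul, mul_one]

variable {e : ι → σ →₀ ℕ}

theorem linearIndependent_mk_monomial [Finite ι]
    (hf : IsUnit (m.leadingCoeff f)) (hg : IsUnit (m.leadingCoeff g))
    (hfg : m.degree f ⊓ m.degree g = 0) (he : Function.Injective e)
    (hred : ∀ k, ¬ m.degree f ≤ e k ∧ ¬ m.degree g ≤ e k) :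
    LinearIndependent R fun k =>
      Ideal.Quotient.mk (Ideal.span {f, g}) (monomial (e k) (1 : R)) := by
  classical
  have := Fintype.ofFinite ι
  refine Fintype.linearIndependent_iff.2 fun c hc k => ?_
  have hmem : ∑ k, monomial (e k) (c k) ∈ Ideal.span {f, g} := by
    rw [← Ideal.Quotient.eq_zero_iff_mem, map_sum, ← hc]
    exact Finset.sum_congr rfl fun k _ => mk_monomial_eq_smul _ _ _
  have hzero := eq_zero_of_mem_span_pair_of_reduced m hf hg hfg hmem fun d hd => by
    obtain ⟨k, -, hk⟩ := Finset.mem_biUnion.1 (support_sum hd)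
    rw [Finset.mem_singleton.1 (support_monomial_subset hk)]
    exact hred k
  simpa [coeff_sum, coeff_monomial, he.eq_iff] using congrArg (coeff (e k)) hzero

theorem top_le_span_mk_monomial
    (hf : IsUnit (m.leadingCoeff f)) (hg : IsUnit (m.leadingCoeff g))
    (hred : ∀ d, ¬ m.degree f ≤ d → ¬ m.degree g ≤ d → d ∈ Set.range e) :
    ⊤ ≤ Submodule.span R
      (Set.range fun k => Ideal.Quotient.mk (Ideal.span {f, g}) (monomial (e k) (1 : R))) := by
  rintro x -
  obtain ⟨x, rfl⟩ := Ideal.Quotient.mk_surjective x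
  obtain ⟨c, r, hx, -, hr⟩ := m.div_set (B := {f, g}) (by rintro h (rfl | rfl) <;> assumption) x
  have hxr : Ideal.Quotient.mk (Ideal.span {f, g}) x = Ideal.Quotient.mk _ r := by
    rw [Ideal.Quotient.eq, hx, add_sub_cancel_right, Finsupp.linearCombination_apply]
    exact Ideal.sum_mem _ fun h _ => Ideal.mul_mem_left _ _ (Ideal.subset_span h.2)
  rw [hxr, r.as_sum, map_sum]
  refine Submodule.sum_mem _ fun d hd => ?_
  obtain ⟨k, rfl⟩ := hred d (hr d hd f (by simp)) (hr d hd g (by simp))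
  rw [mk_monomial_eq_smul]
  exact Submodule.smul_mem _ _ (Submodule.subset_span ⟨k, rfl⟩)

/-- The monomial basis of `R[x] / (f, g)`, for `f` and `g` with disjoint leading exponents: `e`
enumerates the exponents that are divisible by neither of these. -/
noncomputable def standardMonomialBasis [Finite ι]
    (hf : IsUnit (m.leadingCoeff f)) (hg : IsUnit (m.leadingCoeff g))
    (hfg : m.degree f ⊓ m.degree g = 0) (he : Function.Injective e)
    (hred : ∀ d, d ∈ Set.range e ↔ ¬ m.degree f ≤ d ∧ ¬ m.degree g ≤ d) :
    Module.Basis ι R (MvPolynomial σ R ⧸ Ideal.span {f, g}) :=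
  .mk (linearIndependent_mk_monomial m hf hg hfg he fun k => (hred _).1 ⟨k, rfl⟩)
    (top_le_span_mk_monomial m hf hg fun d hdf hdg => (hred d).2 ⟨hdf, hdg⟩)

theorem standardMonomialBasis_apply [Finite ι]
    (hf : IsUnit (m.leadingCoeff f)) (hg : IsUnit (m.leadingCoeff g))
    (hfg : m.degree f ⊓ m.degree g = 0) (he : Function.Injective e)
    (hred : ∀ d, d ∈ Set.range e ↔ ¬ m.degree f ≤ d ∧ ¬ m.degree g ≤ d) (k : ι) :
    standardMonomialBasis m hf hg hfg he hred k = Ideal.Quotient.mk _ (monomial (e k) 1) :=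
  Module.Basis.mk_apply _ _ k

end DisjointLeadingTerms

section Norm

variable {R N : Type*} [CommRing R] [CommRing N] [Algebra R N] [Module.Free R N] [Module.Finite R N]

theorem dvd_algebraMap_norm (x : N) : x ∣ algebraMap R N (Algebra.norm R x) := by
  set χ := (Algebra.lmul R N x).charpoly
  have hχ : Polynomial.aeval x χ = 0 := by
    have h := LinearMap.aeval_self_charpoly (Algebra.lmul R N x)
    rw [Polynomial.aeval_algHom_apply, ← map_zero (Algebra.lmul R N)] at h
    exact Algebra.lmul_injective h
  have hcoeff : x ∣ algebraMap R N (χ.coeff 0) := by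
    obtain ⟨s, hs⟩ := Polynomial.X_dvd_sub_C (p := χ)
    have h := congrArg (Polynomial.aeval x) hs
    rw [map_sub, hχ, Polynomial.aeval_C, map_mul, Polynomial.aeval_X, zero_sub] at h
    exact dvd_neg.1 ⟨_, h⟩
  rw [Algebra.norm_apply, LinearMap.det_eq_sign_charpoly_coeff, map_mul]
  exact hcoeff.mul_left _

theorem isUnit_norm_iff {x : N} : IsUnit (Algebra.norm R x) ↔ IsUnit x :=
  ⟨fun h => isUnit_of_dvd_unit (dvd_algebraMap_norm x) (h.map _), fun h => h.map _⟩

theorem radical_span_norm (x : N) :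
    (Ideal.span {Algebra.norm R x}).radical =
      ((Ideal.span {x}).comap (algebraMap R N)).radical := by
  refine le_antisymm (Ideal.radical_mono ?_) (Ideal.radical_le_radical_iff.2 fun r hr => ?_)
  · rw [Ideal.span_singleton_le_iff_mem, Ideal.mem_comap, Ideal.mem_span_singleton]
    exact dvd_algebraMap_norm x
  · refine ⟨Module.finrank R N, Ideal.mem_span_singleton.2 ?_⟩
    rw [← Algebra.norm_algebraMap (S := N)]
    exact map_dvd _ (Ideal.mem_span_singleton.1 hr)

end Norm

section LeftMulMatrix

variable {R R' N N' ι : Type*} [CommRing R] [CommRing R'] [CommRing N] [CommRing N'] [Algebra R N]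
  [Algebra R' N'] {b : Module.Basis ι R N} {b' : Module.Basis ι R' N'}
  {φ : R →+* R'} {Φ : N →+* N'}

theorem leftMulMatrix_map [Fintype ι] [DecidableEq ι]
    (hφ : ∀ r, Φ (algebraMap R N r) = algebraMap R' N' (φ r))
    (hb : ∀ i, Φ (b i) = b' i) (x : N) :
    Algebra.leftMulMatrix b' (Φ x) = (Algebra.leftMulMatrix b x).map φ := by
  have hrepr (y : N) (i : ι) : b'.repr (Φ y) i = φ (b.repr y i) := by
    have hy : Φ y = ∑ j, φ (b.repr y j) • b' j := by
      conv_lhs => rw [← b.sum_repr y]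
      simp only [map_sum, Algebra.smul_def, map_mul, hφ, hb]
    rw [hy, b'.repr_sum_self]
  ext i j
  rw [Matrix.map_apply, Algebra.leftMulMatrix_eq_repr_mul, Algebra.leftMulMatrix_eq_repr_mul,
    ← hb, ← map_mul, hrepr]

theorem norm_map_of_basis [Finite ι] (hφ : ∀ r, Φ (algebraMap R N r) = algebraMap R' N' (φ r))
    (hb : ∀ i, Φ (b i) = b' i) (x : N) :
    Algebra.norm R' (Φ x) = φ (Algebra.norm R x) := by
  classical
  have := Fintype.ofFinite ι
  rw [Algebra.norm_eq_matrix_det b, Algebra.norm_eq_matrix_det b', leftMulMatrix_map hφ hb,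
    RingHom.map_det, RingHom.mapMatrix_apply]

end LeftMulMatrix

theorem norm_X_add_map_eq_charpoly {R N N' ι : Type*} [CommRing R] [CommRing N] [CommRing N']
    [Algebra R N] [Algebra (Polynomial R) N'] [Fintype ι] [DecidableEq ι]
    {b : Module.Basis ι R N} {b' : Module.Basis ι (Polynomial R) N'} {Φ : N →+* N'}
    (hΦ : ∀ r, Φ (algebraMap R N r) = algebraMap (Polynomial R) N' (Polynomial.C r))
    (hb : ∀ i, Φ (b i) = b' i) (x : N) :
    Algebra.norm (Polynomial R) (algebraMap (Polynomial R) N' Polynomial.X + Φ x) =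
      (Algebra.leftMulMatrix b (-x)).charpoly := by
  rw [Algebra.norm_eq_matrix_det b', map_add, AlgHom.commutes, leftMulMatrix_map hΦ hb,
    Matrix.charpoly, Matrix.charmatrix, map_neg, map_neg, sub_neg_eq_add]
  rfl

section Factorial

variable {A : Type*} [CommRing A]

theorem exists_prime_associated_pow_of_isPrime_radical [IsDomain A] [UniqueFactorizationMonoid A]
    {d : A} (hd : d ≠ 0) (hP : (Ideal.span {d}).radical.IsPrime) :
    ∃ π, Prime π ∧ ∃ k, Associated d (π ^ k) := by
  have hmem : (UniqueFactorizationMonoid.factors d).prod ∈ (Ideal.span {d}).radical :=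
    Ideal.mem_of_dvd _ (UniqueFactorizationMonoid.factors_prod hd).symm.dvd
      (Ideal.le_radical (Ideal.mem_span_singleton_self d))
  obtain ⟨π, hπ, n, hn⟩ := (hP.multiset_prod_mem_iff_exists_mem _).1 hmem
  have hprime := UniqueFactorizationMonoid.prime_of_factor π hπ
  obtain ⟨k, -, hk⟩ := (dvd_prime_pow hprime n).1 (Ideal.mem_span_singleton.1 hn)
  exact ⟨π, hprime, k, hk⟩

theorem irreducible_of_isPrime_radical_of_squarefree_map {B F : Type*} [IsDomain A]
    [UniqueFactorizationMonoid A] [CommRing B] [FunLike F A B] [RingHomClass F A B] (φ : F) {d : A}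
    (hP : (Ideal.span {d}).radical.IsPrime) (hsq : Squarefree (φ d)) (hd : ¬ IsUnit (φ d)) :
    Irreducible d := by
  have hd0 : d ≠ 0 := by
    rintro rfl
    refine hd (hsq _ ?_)
    rw [map_zero, mul_zero]
  obtain ⟨π, hπ, k, hk⟩ := exists_prime_associated_pow_of_isPrime_radical hd0 hP
  have hφ : Associated (φ d) (φ π ^ k) := by simpa only [map_pow] using hk.map φ
  rcases lt_trichotomy k 1 with h0 | rfl | h2
  · obtain rfl := Nat.lt_one_iff.1 h0
    exact absurd (hφ.isUnit_iff.2 (by rw [pow_zero]; exact isUnit_one)) hd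
  · rw [pow_one] at hk
    exact hk.irreducible_iff.2 hπ.irreducible
  · have hsqdvd : φ π * φ π ∣ φ d := by
      rw [← sq]
      exact (pow_dvd_pow _ h2).trans hφ.symm.dvd
    exact absurd (hφ.isUnit_iff.2 ((hsq _ hsqdvd).pow k)) hd

end Factorial

theorem squarefree_of_monic_of_natDegree_le_card_roots {L : Type*} [Field L] {f : Polynomial L}
    (hf : f.Monic) {S : Finset L} (hS : ∀ t ∈ S, f.IsRoot t) (hcard : f.natDegree ≤ S.card) :
    Squarefree f := by
  have hroots : f.roots = S.val :=
    Polynomial.roots_eq_of_natDegree_le_card_of_ne_zero hS hcard hf.ne_zero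
  have hprod : ∏ t ∈ S, (Polynomial.X - Polynomial.C t) = f := by
    rw [← Polynomial.prod_multiset_X_sub_C_of_monic_of_roots_card_eq hf ?_, hroots]
    · rfl
    · exact (Polynomial.card_roots' f).antisymm (by rwa [hroots])
  rw [← hprod]
  exact (Polynomial.separable_prod_X_sub_C_iff'.2 fun _ _ _ _ h => h).squarefree

section Milnor

/-- The ideal generated by the partial derivatives of a polynomial in two variables. -/
noncomputable def jacobianIdeal {R : Type*} [CommRing R] (f : MvPolynomial (Fin 2) R) :
    Ideal (MvPolynomial (Fin 2) R) :=
  Ideal.span {pderiv 0 f, pderiv 1 f}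

/-- The norm of `f` in its Milnor algebra `R[X, Y] / (f_X, f_Y)`. When this algebra is free over a
field it is the product of the critical values of `f`. -/
noncomputable def milnorNorm {R : Type*} [CommRing R] (f : MvPolynomial (Fin 2) R) : R :=
  Algebra.norm R (Ideal.Quotient.mk (jacobianIdeal f) f)

/-- The exponents `(i, j)` with `i < a` and `j < b`, as finitely supported functions. -/
noncomputable def boxExponent (a b : ℕ) (k : Fin a × Fin b) : Fin 2 →₀ ℕ :=
  Finsupp.single 0 (k.1 : ℕ) + Finsupp.single 1 (k.2 : ℕ)

theorem boxExponent_injective (a b : ℕ) : Function.Injective (boxExponent a b) := fun k l h => by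
  have h0 := DFunLike.congr_fun h 0
  have h1 := DFunLike.congr_fun h 1
  simp only [boxExponent, Finsupp.add_apply, Finsupp.single_apply] at h0 h1
  ext
  · simpa using h0
  · simpa using h1

theorem mem_range_boxExponent {a b : ℕ} {d : Fin 2 →₀ ℕ} :
    d ∈ Set.range (boxExponent a b) ↔ ¬ Finsupp.single 0 a ≤ d ∧ ¬ Finsupp.single 1 b ≤ d := by
  simp only [Finsupp.single_le_iff, not_le]
  constructor
  · rintro ⟨k, rfl⟩
    simp [boxExponent]
  · rintro ⟨h0, h1⟩
    refine ⟨(⟨d 0, h0⟩, ⟨d 1, h1⟩), ?_⟩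
    ext i
    fin_cases i <;> simp [boxExponent]

theorem coeff_pderiv_congr_of_weight {σ R : Type*} [CommRing R] {w : σ → ℕ} {n : ℕ}
    {f g : MvPolynomial σ R} (h : ∀ d, n ≤ Finsupp.weight w d → coeff d f = coeff d g) {i : σ}
    {d : σ →₀ ℕ} (hd : n ≤ Finsupp.weight w d + w i) :
    coeff d (pderiv i f) = coeff d (pderiv i g) := by
  rw [coeff_pderiv, coeff_pderiv, h]
  rwa [map_add, Finsupp.weight_single, one_smul]

variable {S : Type} [CommRing S] {p q : ℕ}

theorem coeff_wPoly_of_le_weight (a : idxSet p q → S) {d : Fin 2 →₀ ℕ}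
    (hd : p * q ≤ Finsupp.weight ![p, q] d) :
    coeff d (wPoly S p q a) = coeff d (X 1 ^ p - X 0 ^ q) := by
  classical
  rw [wPoly, coeff_add, add_eq_left, coeff_sum]
  refine Finset.sum_eq_zero fun i _ => ?_
  rw [X_pow_eq_monomial, X_pow_eq_monomial, C_mul_monomial, monomial_mul, coeff_monomial, if_neg]
  rintro rfl
  rw [map_add, Finsupp.weight_single, Finsupp.weight_single] at hd
  exact (Finset.mem_filter.1 i.2).2.not_ge hd

theorem leading_pderiv_zero_wPoly (hq : (q : S) ≠ 0) (a : idxSet p q → S) :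
    (weightOrder ![p, q] .lex).degree (pderiv 0 (wPoly S p q a)) = Finsupp.single 0 (q - 1) ∧
      (weightOrder ![p, q] .lex).leadingCoeff (pderiv 0 (wPoly S p q a)) = -q := by
  refine weightOrder_leading_of_coeff_eq (neg_ne_zero.2 hq) fun e he => ?_
  have hq0 : 1 ≤ q := Nat.one_le_iff_ne_zero.2 (by rintro rfl; exact hq Nat.cast_zero)
  rw [coeff_pderiv_congr_of_weight (w := ![p, q]) (fun d => coeff_wPoly_of_le_weight a)]
  · congr 1
    rw [X_pow_eq_monomial, X_pow_eq_monomial, map_sub, pderiv_monomial, pderiv_monomial]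
    simp [← Finsupp.single_tsub]
  · rw [Finsupp.weight_single] at he
    calc p * q = (q - 1) • p + p := by
          rw [← succ_nsmul, Nat.sub_add_cancel hq0, smul_eq_mul, mul_comm]
      _ ≤ _ := Nat.add_le_add_right he p

theorem leading_pderiv_one_wPoly (hp : (p : S) ≠ 0) (a : idxSet p q → S) :
    (weightOrder ![p, q] .lex).degree (pderiv 1 (wPoly S p q a)) = Finsupp.single 1 (p - 1) ∧
      (weightOrder ![p, q] .lex).leadingCoeff (pderiv 1 (wPoly S p q a)) = p := by
  refine weightOrder_leading_of_coeff_eq hp fun e he => ?_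
  have hp0 : 1 ≤ p := Nat.one_le_iff_ne_zero.2 (by rintro rfl; exact hp Nat.cast_zero)
  rw [coeff_pderiv_congr_of_weight (w := ![p, q]) (fun d => coeff_wPoly_of_le_weight a)]
  · congr 1
    rw [X_pow_eq_monomial, X_pow_eq_monomial, map_sub, pderiv_monomial, pderiv_monomial]
    simp [← Finsupp.single_tsub]
  · rw [Finsupp.weight_single] at he
    calc p * q = (p - 1) • q + q := by rw [← succ_nsmul, Nat.sub_add_cancel hp0, smul_eq_mul]
      _ ≤ _ := Nat.add_le_add_right he q

variable [Nontrivial S]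

/-- The basis of the Milnor algebra of `F_a` formed by the monomials `X ^ i * Y ^ j` with
`i < q - 1` and `j < p - 1`. -/
noncomputable def milnorBasis (hp : IsUnit (p : S)) (hq : IsUnit (q : S)) (a : idxSet p q → S) :
    Module.Basis (Fin (q - 1) × Fin (p - 1)) S
      (MvPolynomial (Fin 2) S ⧸ jacobianIdeal (wPoly S p q a)) :=
  standardMonomialBasis (weightOrder ![p, q] .lex) (e := boxExponent (q - 1) (p - 1))
    (by rw [(leading_pderiv_zero_wPoly hq.ne_zero a).2]; exact hq.neg)
    (by rw [(leading_pderiv_one_wPoly hp.ne_zero a).2]; exact hp)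
    (by
      rw [(leading_pderiv_zero_wPoly hq.ne_zero a).1, (leading_pderiv_one_wPoly hp.ne_zero a).1]
      ext i
      fin_cases i <;> simp)
    (boxExponent_injective _ _)
    (fun d => by
      rw [(leading_pderiv_zero_wPoly hq.ne_zero a).1, (leading_pderiv_one_wPoly hp.ne_zero a).1]
      exact mem_range_boxExponent)

theorem milnorBasis_apply (hp : IsUnit (p : S)) (hq : IsUnit (q : S)) (a : idxSet p q → S)
    (k : Fin (q - 1) × Fin (p - 1)) :
    milnorBasis hp hq a k = Ideal.Quotient.mk _ (monomial (boxExponent _ _ k) 1) :=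
  standardMonomialBasis_apply _ _ _ _ _ _ k

end Milnor

section BaseChange

theorem jacobianIdeal_map {R R' : Type*} [CommRing R] [CommRing R'] (φ : R →+* R')
    (f : MvPolynomial (Fin 2) R) :
    jacobianIdeal (map φ f) = (jacobianIdeal f).map (map φ) := by
  rw [jacobianIdeal, jacobianIdeal, Ideal.map_span, Set.image_pair, pderiv_map, pderiv_map]

theorem jacobianIdeal_add_C {R : Type*} [CommRing R] (f : MvPolynomial (Fin 2) R) (t : R) :
    jacobianIdeal (f + C t) = jacobianIdeal f := by
  rw [jacobianIdeal, jacobianIdeal, map_add, map_add, pderiv_C, pderiv_C, add_zero, add_zero]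

theorem milnorNorm_add_C {R : Type*} [CommRing R] (f : MvPolynomial (Fin 2) R) (t : R) :
    milnorNorm (f + C t) =
      Algebra.norm R (algebraMap R _ t + Ideal.Quotient.mk (jacobianIdeal f) f) := by
  have h (I : Ideal (MvPolynomial (Fin 2) R)) (hI : I = jacobianIdeal f) :
      Algebra.norm R (Ideal.Quotient.mk I (f + C t)) =
        Algebra.norm R (algebraMap R _ t + Ideal.Quotient.mk (jacobianIdeal f) f) := by
    rw [hI, map_add, add_comm]
    rfl
  exact h _ (jacobianIdeal_add_C f t)

theorem isUnit_natCast_of_ringHom {R R' : Type*} [Semiring R] [Semiring R'] (φ : R →+* R') {n : ℕ}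
    (hn : IsUnit (n : R)) : IsUnit (n : R') :=
  map_natCast φ n ▸ hn.map φ

variable {S S' : Type} [CommRing S] [CommRing S'] {p q : ℕ}

theorem map_wPoly (φ : S →+* S') (a : idxSet p q → S) :
    map φ (wPoly S p q a) = wPoly S' p q (φ ∘ a) := by
  simp [wPoly]

/-- The map between the Milnor algebras of `F_a` and `F_{φ(a)}` induced by a ring homomorphism
`φ`. -/
noncomputable def milnorMap (φ : S →+* S') (a : idxSet p q → S) :
    MvPolynomial (Fin 2) S ⧸ jacobianIdeal (wPoly S p q a) →+*
      MvPolynomial (Fin 2) S' ⧸ jacobianIdeal (wPoly S' p q (φ ∘ a)) :=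
  Ideal.quotientMap _ (map φ)
    (by rw [← Ideal.map_le_iff_le_comap, ← jacobianIdeal_map, map_wPoly])

theorem milnorMap_mk (φ : S →+* S') (a : idxSet p q → S) (f : MvPolynomial (Fin 2) S) :
    milnorMap φ a (Ideal.Quotient.mk _ f) = Ideal.Quotient.mk _ (map φ f) :=
  Ideal.quotientMap_mk

theorem milnorMap_algebraMap (φ : S →+* S') (a : idxSet p q → S) (r : S) :
    milnorMap φ a (algebraMap S _ r) = algebraMap S' _ (φ r) := by
  refine (milnorMap_mk φ a (C r)).trans ?_
  rw [map_C]
  rfl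

variable [Nontrivial S] [Nontrivial S']

theorem milnorMap_milnorBasis (hp : IsUnit (p : S)) (hq : IsUnit (q : S)) (hp' : IsUnit (p : S'))
    (hq' : IsUnit (q : S')) (φ : S →+* S') (a : idxSet p q → S) (k : Fin (q - 1) × Fin (p - 1)) :
    milnorMap φ a (milnorBasis hp hq a k) = milnorBasis hp' hq' (φ ∘ a) k := by
  rw [milnorBasis_apply, milnorBasis_apply, milnorMap_mk, map_monomial, map_one]

theorem milnorNorm_wPoly_comp (hp : IsUnit (p : S)) (hq : IsUnit (q : S)) (φ : S →+* S')
    (a : idxSet p q → S) :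
    milnorNorm (wPoly S' p q (φ ∘ a)) = φ (milnorNorm (wPoly S p q a)) := by
  have hp' : IsUnit (p : S') := isUnit_natCast_of_ringHom φ hp
  have hq' : IsUnit (q : S') := isUnit_natCast_of_ringHom φ hq
  rw [milnorNorm, milnorNorm, ← norm_map_of_basis (milnorMap_algebraMap φ a)
    (milnorMap_milnorBasis hp hq hp' hq' φ a), milnorMap_mk, map_wPoly]

theorem milnorNorm_wPoly_add_X (hp : IsUnit (p : S)) (hq : IsUnit (q : S)) (a : idxSet p q → S) :
    milnorNorm (wPoly (Polynomial S) p q (Polynomial.C ∘ a) + C Polynomial.X) =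
      (Algebra.leftMulMatrix (milnorBasis hp hq a)
        (-Ideal.Quotient.mk _ (wPoly S p q a))).charpoly := by
  have hp' : IsUnit (p : Polynomial S) := isUnit_natCast_of_ringHom Polynomial.C hp
  have hq' : IsUnit (q : Polynomial S) := isUnit_natCast_of_ringHom Polynomial.C hq
  rw [milnorNorm_add_C, ← norm_X_add_map_eq_charpoly (milnorMap_algebraMap Polynomial.C a)
    (milnorMap_milnorBasis hp hq hp' hq' Polynomial.C a), milnorMap_mk, map_wPoly]

theorem genDelta_eq_milnorNorm (K : Type) [Field K] (p q : ℕ) :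
    genDelta K p q = milnorNorm (wPoly (coefRing K p q) p q X) :=
  rfl

theorem aeval_genDelta {K : Type} [Field K] [Algebra K S] (hp : (p : K) ≠ 0) (hq : (q : K) ≠ 0)
    (a : idxSet p q → S) : aeval a (genDelta K p q) = milnorNorm (wPoly S p q a) := by
  have ha : (aeval (R := K) a).toRingHom ∘ X = a := funext fun i => aeval_X _ i
  have hnorm := milnorNorm_wPoly_comp (isUnit_natCast_of_ringHom C hp.isUnit)
    (isUnit_natCast_of_ringHom C hq.isUnit) (aeval (R := K) a).toRingHom X
  rw [ha] at hnorm
  exact hnorm.symm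

end BaseChange

section SingularIdeal

/-- The ideal generated by a polynomial in two variables and its partial derivatives, whose zeros
are the singular points. -/
noncomputable def singularIdeal {R : Type*} [CommRing R] (f : MvPolynomial (Fin 2) R) :
    Ideal (MvPolynomial (Fin 2) R) :=
  Ideal.span {f, pderiv 0 f, pderiv 1 f}

theorem singularIdeal_map {R R' : Type*} [CommRing R] [CommRing R'] (φ : R →+* R')
    (f : MvPolynomial (Fin 2) R) :
    singularIdeal (map φ f) = (singularIdeal f).map (map φ) := by
  simp only [singularIdeal, Ideal.map_span, Set.image_insert_eq, Set.image_singleton, pderiv_map]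

theorem singularIdeal_eq_sup {R : Type*} [CommRing R] (f : MvPolynomial (Fin 2) R) :
    singularIdeal f = jacobianIdeal f ⊔ Ideal.span {f} := by
  rw [singularIdeal, Ideal.span_insert, sup_comm, jacobianIdeal]

theorem comap_span_mk_jacobianIdeal {R : Type*} [CommRing R] (f : MvPolynomial (Fin 2) R) :
    (Ideal.span {Ideal.Quotient.mk (jacobianIdeal f) f}).comap
      (Ideal.Quotient.mk (jacobianIdeal f)) = singularIdeal f := by
  rw [singularIdeal_eq_sup, ← Ideal.comap_map_quotientMk, Ideal.map_span, Set.image_singleton]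

theorem radical_span_milnorNorm {R : Type*} [CommRing R] {f : MvPolynomial (Fin 2) R}
    [Module.Free R (MvPolynomial (Fin 2) R ⧸ jacobianIdeal f)]
    [Module.Finite R (MvPolynomial (Fin 2) R ⧸ jacobianIdeal f)] :
    (Ideal.span {milnorNorm f}).radical = ((singularIdeal f).comap C).radical := by
  rw [milnorNorm, radical_span_norm, ← comap_span_mk_jacobianIdeal, Ideal.comap_comap]
  rfl

theorem isSingAt_iff_singularIdeal_le_ker {S : Type} [CommRing S] {f : MvPolynomial (Fin 2) S}
    {P : S × S} : IsSingAt S f P ↔ singularIdeal f ≤ RingHom.ker (eval ![P.1, P.2]) := by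
  simp [IsSingAt, singularIdeal, Ideal.span_le, Set.insert_subset_iff, RingHom.mem_ker]

variable {L : Type} [Field L] [IsAlgClosed L] {f : MvPolynomial (Fin 2) L}

theorem exists_isSingAt_iff_singularIdeal_ne_top :
    (∃ P, IsSingAt L f P) ↔ singularIdeal f ≠ ⊤ := by
  refine ⟨fun ⟨P, hP⟩ htop => ?_, fun h => ?_⟩
  · rw [isSingAt_iff_singularIdeal_le_ker, htop, top_le_iff] at hP
    exact RingHom.ker_ne_top _ hP
  · obtain ⟨M, hM, hle⟩ := Ideal.exists_le_maximal _ h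
    obtain ⟨x, rfl⟩ := isMaximal_iff_eq_vanishingIdeal_singleton.1 hM
    have hx : ![x 0, x 1] = x := funext (Fin.forall_fin_two.2 ⟨rfl, rfl⟩)
    refine ⟨(x 0, x 1), isSingAt_iff_singularIdeal_le_ker.2 fun g hg => ?_⟩
    rw [RingHom.mem_ker, hx]
    exact hle hg x rfl

theorem milnorNorm_eq_zero_iff [Module.Finite L (MvPolynomial (Fin 2) L ⧸ jacobianIdeal f)] :
    milnorNorm f = 0 ↔ ∃ P, IsSingAt L f P := by
  rw [exists_isSingAt_iff_singularIdeal_ne_top, ← comap_span_mk_jacobianIdeal, ne_eq,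
    Ideal.comap_eq_top_iff, Ideal.span_singleton_eq_top, ← isUnit_norm_iff (R := L),
    isUnit_iff_ne_zero, not_not, milnorNorm]

end SingularIdeal

section Tangent

/-- The polynomial `c + d X + e Y`. -/
noncomputable def affinePoly {S : Type*} [CommRing S] (c d e : S) : MvPolynomial (Fin 2) S :=
  C c + C d * X 0 + C e * X 1

/-- The coefficient tuple of `c + d X + e Y`. -/
def affineCoeffs {S : Type*} [CommRing S] (p q : ℕ) (c d e : S) (i : idxSet p q) : S :=
  (Pi.single (0, 0) c + Pi.single (1, 0) d + Pi.single (0, 1) e : ℕ × ℕ → S) i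

theorem affineCoeffs_mem {S : Type*} [CommRing S] {I : Ideal S} {c d e : S} (hc : c ∈ I)
    (hd : d ∈ I) (he : e ∈ I) {p q : ℕ} (i : idxSet p q) : affineCoeffs p q c d e i ∈ I := by
  simp only [affineCoeffs, Pi.add_apply, Pi.single_apply]
  refine add_mem (add_mem ?_ ?_) ?_ <;> split_ifs <;> first | assumption | exact zero_mem _

theorem isSingAt_sub_affinePoly {S : Type} [CommRing S] (f : MvPolynomial (Fin 2) S) {x y d e : S}
    (hd : eval ![x, y] (pderiv 0 f) = d) (he : eval ![x, y] (pderiv 1 f) = e) :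
    IsSingAt S (f - affinePoly (eval ![x, y] f - d * x - e * y) d e) (x, y) := by
  refine ⟨?_, ?_, ?_⟩
  · simp [affinePoly, add_assoc]
  · simp [affinePoly, hd, pderiv_X]
  · simp [affinePoly, he, pderiv_X]

variable {S : Type} [CommRing S] {p q : ℕ}

theorem mem_idxSet {t : ℕ × ℕ} :
    t ∈ idxSet p q ↔ t.1 < q ∧ t.2 < p ∧ t.1 * p + t.2 * q < p * q := by
  rw [idxSet, Finset.mem_filter, Finset.mem_product, Finset.mem_range, Finset.mem_range, and_assoc]

theorem sum_single_idxSet {t : ℕ × ℕ} (ht : t ∈ idxSet p q) (c : S) :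
    ∑ i : idxSet p q, C ((Pi.single t c : ℕ × ℕ → S) i) *
        X 0 ^ (i : ℕ × ℕ).1 * X 1 ^ (i : ℕ × ℕ).2 =
      (C c * X 0 ^ t.1 * X 1 ^ t.2 : MvPolynomial (Fin 2) S) := by
  rw [Finset.sum_eq_single ⟨t, ht⟩, Pi.single_eq_same]
  · intro i _ hi
    rw [Pi.single_eq_of_ne fun h => hi (Subtype.ext h), C_0, zero_mul, zero_mul]
  · simp

theorem wPoly_sub_affineCoeffs (hp : 1 < p) (hq : 1 < q) (a : idxSet p q → S) (c d e : S) :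
    wPoly S p q (a - affineCoeffs p q c d e) = wPoly S p q a - affinePoly c d e := by
  have hp0 : 0 < p := by omega
  have hq0 : 0 < q := by omega
  have h00 : (0, 0) ∈ idxSet p q := mem_idxSet.2 ⟨hq0, hp0, by simpa using ⟨hp0, hq0⟩⟩
  have h10 : (1, 0) ∈ idxSet p q := mem_idxSet.2
    ⟨hq, hp0, by simpa using lt_mul_of_one_lt_right hp0 hq⟩
  have h01 : (0, 1) ∈ idxSet p q := mem_idxSet.2
    ⟨hq0, hp, by simpa using lt_mul_of_one_lt_left hq0 hp⟩
  have hsum : ∑ i : idxSet p q, C (affineCoeffs p q c d e i) *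
      X 0 ^ (i : ℕ × ℕ).1 * X 1 ^ (i : ℕ × ℕ).2 = affinePoly c d e := by
    simp only [affineCoeffs, Pi.add_apply, C_add, add_mul, Finset.sum_add_distrib,
      sum_single_idxSet, h00, h10, h01, affinePoly, pow_zero, pow_one, mul_one]
  rw [wPoly, wPoly, ← hsum, add_sub_assoc, ← Finset.sum_sub_distrib]
  simp only [Pi.sub_apply, C_sub, sub_mul]

theorem wPoly_add_C (hp : 1 < p) (hq : 1 < q) (a : idxSet p q → S) (t : S) :
    wPoly S p q a + C t = wPoly S p q (a - affineCoeffs p q (-t) 0 0) := by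
  rw [wPoly_sub_affineCoeffs hp hq]
  simp [affinePoly]

end Tangent

section Generic

theorem eval_X_map_C {R : Type*} [CommRing R] (f : MvPolynomial (Fin 2) R) :
    eval ![X 0, X 1] (map C f) = f := by
  have hX : ![X 0, X 1] = (X : Fin 2 → MvPolynomial (Fin 2) R) :=
    funext (Fin.forall_fin_two.2 ⟨rfl, rfl⟩)
  rw [eval_map, hX, eval₂_eta]

/-- Evaluating the transformed coefficients at `(X, Y)` kills the ideal and is the identity modulo
it, so that its kernel, which is prime, is the ideal. -/
theorem isPrime_singularIdeal_of_isSingAt_map {R : Type} [CommRing R] [IsDomain R]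
    {f : MvPolynomial (Fin 2) R} {τ : R →+* MvPolynomial (Fin 2) R}
    (hτ : ∀ r, τ r - C r ∈ singularIdeal f) (hf : IsSingAt _ (map τ f) (X 0, X 1)) :
    (singularIdeal f).IsPrime := by
  let χ : MvPolynomial (Fin 2) R →+* MvPolynomial (Fin 2) R := (eval ![X 0, X 1]).comp (map τ)
  have hle : singularIdeal f ≤ RingHom.ker χ := fun g hg => by
    rw [isSingAt_iff_singularIdeal_le_ker, singularIdeal_map] at hf
    exact hf (Ideal.mem_map_of_mem _ hg)
  have hχ : (Ideal.Quotient.mk (singularIdeal f)).comp χ = Ideal.Quotient.mk (singularIdeal f) := by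
    refine MvPolynomial.ringHom_ext (fun r => ?_) (Fin.forall_fin_two.2 ⟨?_, ?_⟩)
    · simpa [χ] using Ideal.Quotient.eq.2 (hτ r)
    · simp [χ]
    · simp [χ]
  have hker : RingHom.ker χ ≤ singularIdeal f := fun g hg => by
    rw [← Ideal.Quotient.eq_zero_iff_mem, ← hχ, RingHom.comp_apply, RingHom.mem_ker.1 hg, map_zero]
  rw [hle.antisymm hker]
  exact RingHom.ker_isPrime χ

/-- The coefficient tuple of the tangent plane of `f` at the generic point `(X, Y)`. -/
noncomputable def tangentCoeffs {R : Type*} [CommRing R] (p q : ℕ) (f : MvPolynomial (Fin 2) R) :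
    idxSet p q → MvPolynomial (Fin 2) R :=
  affineCoeffs p q (f - pderiv 0 f * X 0 - pderiv 1 f * X 1) (pderiv 0 f) (pderiv 1 f)

theorem tangentCoeffs_mem {R : Type*} [CommRing R] {p q : ℕ} (f : MvPolynomial (Fin 2) R)
    (i : idxSet p q) : tangentCoeffs p q f i ∈ singularIdeal f := by
  have h0 : pderiv 0 f ∈ singularIdeal f := Ideal.subset_span (by simp)
  have h1 : pderiv 1 f ∈ singularIdeal f := Ideal.subset_span (by simp)
  exact affineCoeffs_mem
    (sub_mem (sub_mem (Ideal.subset_span (by simp)) (Ideal.mul_mem_right _ _ h0))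
      (Ideal.mul_mem_right _ _ h1)) h0 h1 i

theorem isSingAt_map_wPoly_of_tangentCoeffs {R : Type} [CommRing R] {p q : ℕ} (hp : 1 < p)
    (hq : 1 < q) {a : idxSet p q → R} {τ : R →+* MvPolynomial (Fin 2) R}
    (hτ : τ ∘ a = C ∘ a - tangentCoeffs p q (wPoly R p q a)) :
    IsSingAt _ (map τ (wPoly R p q a)) (X 0, X 1) := by
  have h := isSingAt_sub_affinePoly (map C (wPoly R p q a))
    (by rw [pderiv_map, eval_X_map_C]) (by rw [pderiv_map, eval_X_map_C])
  rw [eval_X_map_C] at h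
  rwa [map_wPoly, hτ, tangentCoeffs, wPoly_sub_affineCoeffs hp hq, ← map_wPoly]

variable {K : Type} [Field K] {p q : ℕ}

/-- The substitution that subtracts from the generic polynomial its tangent plane at the generic
point `(X, Y)`. -/
noncomputable def tangentSubst (K : Type) [Field K] (p q : ℕ) :
    coefRing K p q →ₐ[K] genRing K p q :=
  aeval fun i => C (X i) - tangentCoeffs p q (genF K p q) i

theorem tangentSubst_X (i : idxSet p q) :
    tangentSubst K p q (X i) = C (X i) - tangentCoeffs p q (genF K p q) i :=
  aeval_X _ i

theorem tangentSubst_sub_C_mem (r : coefRing K p q) :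
    tangentSubst K p q r - C r ∈ singularIdeal (genF K p q) := by
  rw [← Ideal.Quotient.mk_eq_mk_iff_sub_mem]
  refine RingHom.congr_fun (MvPolynomial.ringHom_ext (f := (Ideal.Quotient.mk _).comp
    (tangentSubst K p q).toRingHom) (g := (Ideal.Quotient.mk _).comp C) (fun c => ?_)
    fun i => (Ideal.Quotient.mk_eq_mk_iff_sub_mem _ _).2 ?_) r
  · exact congrArg _ ((tangentSubst K p q).commutes c)
  · rw [AlgHom.toRingHom_eq_coe, RingHom.coe_coe, tangentSubst_X, sub_sub_cancel_left]
    exact neg_mem (tangentCoeffs_mem _ i)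

theorem isPrime_radical_span_genDelta (hp : (p : K) ≠ 0) (hp1 : 1 < p) (hq : (q : K) ≠ 0)
    (hq1 : 1 < q) : (Ideal.span {genDelta K p q}).radical.IsPrime := by
  let b := milnorBasis (S := coefRing K p q) (isUnit_natCast_of_ringHom C hp.isUnit)
    (isUnit_natCast_of_ringHom C hq.isUnit) X
  have := Module.Free.of_basis b
  have := Module.Finite.of_basis b
  have hprime := isPrime_singularIdeal_of_isSingAt_map (tangentSubst_sub_C_mem (K := K))
    (isSingAt_map_wPoly_of_tangentCoeffs hp1 hq1 (funext tangentSubst_X))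
  rw [genDelta_eq_milnorNorm, radical_span_milnorNorm]
  have hcomap := Ideal.comap_isPrime C (singularIdeal (genF K p q))
  exact hcomap.radical.symm ▸ hcomap

end Generic

section CriticalValues

variable {L : Type} [Field L] {p q : ℕ}

/-- The polynomial whose roots, over an algebraically closed field, are the `t` for which `F_a + t`
has a singular point. -/
noncomputable def criticalPoly (a : idxSet p q → L) : Polynomial L :=
  milnorNorm (wPoly (Polynomial L) p q (Polynomial.C ∘ a) + C Polynomial.X)

theorem criticalPoly_monic (hp : (p : L) ≠ 0) (hq : (q : L) ≠ 0) (a : idxSet p q → L) :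
    (criticalPoly a).Monic := by
  rw [criticalPoly, milnorNorm_wPoly_add_X hp.isUnit hq.isUnit]
  exact Matrix.charpoly_monic _

theorem criticalPoly_natDegree (hp : (p : L) ≠ 0) (hq : (q : L) ≠ 0) (a : idxSet p q → L) :
    (criticalPoly a).natDegree = (q - 1) * (p - 1) := by
  rw [criticalPoly, milnorNorm_wPoly_add_X hp.isUnit hq.isUnit, Matrix.charpoly_natDegree_eq_dim,
    Fintype.card_prod, Fintype.card_fin, Fintype.card_fin]

theorem aeval_genDelta_eq_criticalPoly {K : Type} [Field K] [Algebra K L] (hp : (p : K) ≠ 0)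
    (hp1 : 1 < p) (hq : (q : K) ≠ 0) (hq1 : 1 < q) (a : idxSet p q → L) :
    aeval (Polynomial.C ∘ a - affineCoeffs p q (-Polynomial.X) 0 0) (genDelta K p q) =
      criticalPoly a := by
  rw [aeval_genDelta hp hq, ← wPoly_add_C hp1 hq1, criticalPoly]

theorem milnorNorm_wPoly_eq_zero_iff [IsAlgClosed L] (hp : (p : L) ≠ 0) (hq : (q : L) ≠ 0)
    (a : idxSet p q → L) : milnorNorm (wPoly L p q a) = 0 ↔ ∃ P, IsSingAt L (wPoly L p q a) P :=
  have := Module.Finite.of_basis (milnorBasis hp.isUnit hq.isUnit a)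
  milnorNorm_eq_zero_iff

theorem criticalPoly_isRoot_iff [IsAlgClosed L] (hp : (p : L) ≠ 0) (hp1 : 1 < p) (hq : (q : L) ≠ 0)
    (hq1 : 1 < q) (a : idxSet p q → L) (t : L) :
    (criticalPoly a).IsRoot t ↔ ∃ P, IsSingAt L (wPoly L p q a + C t) P := by
  have heval : map (Polynomial.evalRingHom t)
      (wPoly (Polynomial L) p q (Polynomial.C ∘ a) + C Polynomial.X) = wPoly L p q a + C t := by
    have ha : Polynomial.evalRingHom t ∘ Polynomial.C ∘ a = a :=
      funext fun i => Polynomial.eval_C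
    rw [map_add, map_wPoly, map_C, ha, Polynomial.coe_evalRingHom, Polynomial.eval_X]
  rw [wPoly_add_C hp1 hq1, map_wPoly] at heval
  rw [Polynomial.IsRoot, ← Polynomial.coe_evalRingHom, criticalPoly, wPoly_add_C hp1 hq1,
    ← milnorNorm_wPoly_comp (isUnit_natCast_of_ringHom Polynomial.C hp.isUnit)
      (isUnit_natCast_of_ringHom Polynomial.C hq.isUnit), milnorNorm_wPoly_eq_zero_iff hp hq, heval]

end CriticalValues

section Pencil

theorem exists_injOn_add_mul {L : Type*} [Field L] [Infinite L] (U V : Finset L) :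
    ∃ s : L, Set.InjOn (fun z : L × L => z.1 + s * z.2) (U ×ˢ V : Finset (L × L)) := by
  classical
  obtain ⟨s, hs⟩ := Infinite.exists_notMem_finset
    (((U ×ˢ V) ×ˢ (U ×ˢ V)).image fun z => (z.1.1 - z.2.1) / (z.2.2 - z.1.2))
  refine ⟨s, fun z hz z' hz' (h : z.1 + s * z.2 = z'.1 + s * z'.2) => ?_⟩
  have hsnd : z.2 = z'.2 := by
    by_contra hne
    refine hs (Finset.mem_image.2 ⟨(z, z'), Finset.mk_mem_product hz hz', ?_⟩)
    rw [div_eq_iff (sub_ne_zero.2 (Ne.symm hne))]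
    linear_combination h
  exact Prod.ext (by rwa [hsnd, add_left_inj] at h) hsnd

theorem isSingAt_pencil {S : Type} [CommRing S] {p q : ℕ} (hp : p ≠ 0) (hq : q ≠ 0) {c ξ η : S}
    (hξ : ξ ^ (q - 1) = 1) (hη : η ^ (p - 1) = 1) :
    IsSingAt S (X 1 ^ p - X 0 ^ q -
      affinePoly ((q - 1) * ξ + (1 - p) * c ^ p * η) (-q) (p * c ^ (p - 1))) (ξ, c * η) := by
  obtain ⟨p, rfl⟩ := Nat.exists_eq_succ_of_ne_zero hp
  obtain ⟨q, rfl⟩ := Nat.exists_eq_succ_of_ne_zero hq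
  simp only [Nat.succ_eq_add_one, Nat.add_sub_cancel] at hξ hη ⊢
  convert isSingAt_sub_affinePoly (X 1 ^ (p + 1) - X 0 ^ (q + 1)) (x := ξ) (y := c * η)
    (d := -(q + 1 : ℕ)) (e := (p + 1 : ℕ) * c ^ p) ?_ ?_ using 3
  · have heval : eval ![ξ, c * η] (X 1 ^ (p + 1) - X 0 ^ (q + 1)) =
        (c * η) ^ (p + 1) - ξ ^ (q + 1) := by
      simp
    rw [heval]
    push_cast
    linear_combination ξ * hξ - c ^ (p + 1) * η * hη
  · simp [pderiv_X, hξ]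
  · simp [pderiv_X, mul_pow, hη]

variable {L : Type} [Field L] [IsAlgClosed L] {p q : ℕ}

theorem one_lt_of_natCast_ne {R : Type*} [NonAssocSemiring R] {n : ℕ} (h0 : (n : R) ≠ 0)
    (h1 : (n : R) ≠ 1) : 1 < n := by
  rcases n with _ | _ | n
  · exact absurd Nat.cast_zero h0
  · exact absurd Nat.cast_one h1
  · omega

theorem card_nthRootsFinset_one {n : ℕ} (hn : (n : L) ≠ 0) :
    (Polynomial.nthRootsFinset n (1 : L)).card = n := by
  have : NeZero (n : L) := ⟨hn⟩
  obtain ⟨ζ, hζ⟩ := HasEnoughRootsOfUnity.exists_primitiveRoot L n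
  exact hζ.card_nthRootsFinset

theorem criticalPoly_isRoot_pencil (hp : (p : L) ≠ 0) (hp1 : 1 < p) (hq : (q : L) ≠ 0) (hq1 : 1 < q)
    {c s ξ η : L} (hc : (1 - p) * c ^ p = (q - 1) * s) (hξ : ξ ^ (q - 1) = 1)
    (hη : η ^ (p - 1) = 1) :
    (criticalPoly (0 - affineCoeffs p q 0 (-(q : L)) (p * c ^ (p - 1)))).IsRoot
      (-((q - 1) * (ξ + s * η))) := by
  refine (criticalPoly_isRoot_iff hp hp1 hq hq1 _ _).2 ⟨(ξ, c * η), ?_⟩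
  convert isSingAt_pencil (p := p) (q := q) (c := c) (by omega) (by omega) hξ hη using 1
  rw [wPoly_sub_affineCoeffs hp1 hq1, hc]
  simp only [wPoly, affinePoly, Pi.zero_apply, C_0, zero_mul, Finset.sum_const_zero, add_zero,
    zero_add, C_neg, C_sub, C_add, C_mul, C_1]
  ring

theorem exists_squarefree_criticalPoly (hp : (p : L) ≠ 0) (hp1 : (p : L) ≠ 1) (hq : (q : L) ≠ 0)
    (hq1 : (q : L) ≠ 1) : ∃ a : idxSet p q → L, Squarefree (criticalPoly a) := by
  classical
  have hp' := one_lt_of_natCast_ne hp hp1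
  have hq' := one_lt_of_natCast_ne hq hq1
  let U := Polynomial.nthRootsFinset (q - 1) (1 : L)
  let V := Polynomial.nthRootsFinset (p - 1) (1 : L)
  obtain ⟨s, hs⟩ := exists_injOn_add_mul U V
  -- With this `c` the critical values are `(q - 1) * (ξ + s * η)`, distinct by the choice of `s`.
  obtain ⟨c, hc⟩ := IsAlgClosed.exists_pow_nat_eq ((q - 1 : L) * s / (1 - p)) (n := p) (by omega)
  have hc : (1 - p) * c ^ p = (q - 1 : L) * s := by
    rw [hc, mul_div_cancel₀ _ (sub_ne_zero.2 hp1.symm)]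
  let S := (U ×ˢ V).image fun z => -((q - 1 : L) * (z.1 + s * z.2))
  have hcard : S.card = (q - 1) * (p - 1) := by
    rw [Finset.card_image_of_injOn, Finset.card_product, card_nthRootsFinset_one,
      card_nthRootsFinset_one]
    · rwa [Nat.cast_pred (by omega), sub_ne_zero]
    · rwa [Nat.cast_pred (by omega), sub_ne_zero]
    · exact (neg_injective.comp (mul_right_injective₀ (sub_ne_zero.2 hq1))).comp_injOn hs
  refine ⟨0 - affineCoeffs p q 0 (-(q : L)) (p * c ^ (p - 1)),
    squarefree_of_monic_of_natDegree_le_card_roots (S := S) (criticalPoly_monic hp hq _)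
      (fun t ht => ?_) (by rw [criticalPoly_natDegree hp hq, hcard])⟩
  obtain ⟨z, hz, rfl⟩ := Finset.mem_image.1 ht
  obtain ⟨hξ, hη⟩ := Finset.mem_product.1 hz
  rw [Polynomial.mem_nthRootsFinset (by omega)] at hξ hη
  exact criticalPoly_isRoot_pencil hp hp' hq hq' hc hξ hη

end Pencil

theorem delta_irreducible_general (K L : Type) [Field K] [Field L] [IsAlgClosed L] [Algebra K L]
    (p q : ℕ) (hp : (p : K) ≠ 0) (hp1 : (p : K) ≠ 1) (hq : (q : K) ≠ 0) (hq1 : (q : K) ≠ 1) :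
    Irreducible (genDelta K p q) ∧
      {a : idxSet p q → L | ∃ P : L × L, IsSingAt L (wPoly L p q a) P} =
        {a : idxSet p q → L | aeval a (genDelta K p q) = 0} := by
  have hp' := one_lt_of_natCast_ne hp hp1
  have hq' := one_lt_of_natCast_ne hq hq1
  have hpL : (p : L) ≠ 0 := by simpa using (algebraMap K L).injective.ne hp
  have hqL : (q : L) ≠ 0 := by simpa using (algebraMap K L).injective.ne hq
  obtain ⟨a, ha⟩ := exists_squarefree_criticalPoly hpL
    (by simpa using (algebraMap K L).injective.ne hp1) hqL
    (by simpa using (algebraMap K L).injective.ne hq1)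
  refine ⟨irreducible_of_isPrime_radical_of_squarefree_map
    (aeval (Polynomial.C ∘ a - affineCoeffs p q (-Polynomial.X) 0 0))
    (isPrime_radical_span_genDelta hp hp' hq hq') ?_ ?_, ?_⟩
  · rwa [aeval_genDelta_eq_criticalPoly hp hp' hq hq']
  · rw [aeval_genDelta_eq_criticalPoly hp hp' hq hq']
    refine Polynomial.not_isUnit_of_natDegree_pos _ ?_
    rw [criticalPoly_natDegree hpL hqL]
    exact Nat.mul_pos (by omega) (by omega)
  · ext a
    rw [Set.mem_ofPred_eq, Set.mem_ofPred_eq, aeval_genDelta hp hq,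
      milnorNorm_wPoly_eq_zero_iff hpL hqL]

/-- `Δ ∈ R` is irreducible; consequently the set of `a ∈ K^I` for which the curve `C_a`
is singular is the irreducible hypersurface defined by the irreducible equation `Δ = 0`. -/
theorem delta_irreducible
    (K : Type) [Field K] [IsAlgClosed K] [CharZero K]
    (p q : ℕ) (hp : 1 < p) (hpq : p < q) (hco : Nat.Coprime p q) :
    Irreducible (genDelta K p q) ∧
    {a : idxSet p q → K | ∃ P : K × K, IsSingAt K (wPoly K p q a) P} =
      {a : idxSet p q → K | eval a (genDelta K p q) = 0} := by
  simpa only [aeval_eq_eval] using delta_irreducible_general K K p q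
    (by norm_cast; omega) (by norm_cast; omega) (by norm_cast; omega) (by norm_cast; omega)
end
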